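/- Let E = E(J_∅,{n_k},{c_k},{η_{k,j}}) be a homogeneous perfect set satisfying: there exist constants L ≥ 1 and c > 0 such that 1/L ≤ η_{k,i}/η_{k,j} ≤ L and η_{k,0} + η_{k,n_k} ≤ c·η_{k,i} for all k ≥ 1 and all 1 ≤ i, j ≤ n_k − 1. If dim_H E = 1, then dim_H f(E) = 1 for every 1-dimensional quasisymmetric mapping f. -/

import Mathlib

open Set Filter MeasureTheory
open scoped ENNReal

/-- `σ` is a valid word: the entry at (0-indexed) position `j` lies in `[1, n (j+1)]`,
so that words of length `k` correspond to indices `(i₁, …, i_k)` with `1 ≤ i_j ≤ n_j`. -/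
def ValidWord (n : ℕ → ℕ) (σ : List ℕ) : Prop :=
  ∀ j (h : j < σ.length), 1 ≤ σ.get ⟨j, h⟩ ∧ σ.get ⟨j, h⟩ ≤ n (j + 1)

/-- A homogeneous perfect structure with parameters `n`, `c`, `η` on `J_∅ = [0,1]`:
`a σ` and `b σ` are the left and right endpoints of the basic interval `J_σ = [a σ, b σ]`.
The fields record that `n k ≥ 2`, `0 < c k < 1`, `η k j ≥ 0`, that the children
`J_{σ*1}, …, J_{σ*n_{k+1}}` of `J_σ` (for `σ` of length `k`) are subintervals of `J_σ`
situated from left to right, that `|J_{σ*i}| = c_{k+1} |J_σ|`, and that the gaps have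
the prescribed lengths `η_{k+1,0}, …, η_{k+1,n_{k+1}}`. -/
structure HomogeneousPerfectStructure (n : ℕ → ℕ) (c : ℕ → ℝ) (η : ℕ → ℕ → ℝ) where
  hn : ∀ k, 1 ≤ k → 2 ≤ n k
  hc : ∀ k, 1 ≤ k → 0 < c k ∧ c k < 1
  hη : ∀ k j, 1 ≤ k → j ≤ n k → 0 ≤ η k j
  a : List ℕ → ℝ
  b : List ℕ → ℝ
  root_a : a [] = 0
  root_b : b [] = 1
  sub_left : ∀ σ, ValidWord n σ → ∀ i, 1 ≤ i → i ≤ n (σ.length + 1) →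
    a σ ≤ a (σ ++ [i])
  sub_right : ∀ σ, ValidWord n σ → ∀ i, 1 ≤ i → i ≤ n (σ.length + 1) →
    b (σ ++ [i]) ≤ b σ
  ordered : ∀ σ, ValidWord n σ → ∀ i, 1 ≤ i → i + 1 ≤ n (σ.length + 1) →
    b (σ ++ [i]) ≤ a (σ ++ [i + 1])
  len_eq : ∀ σ, ValidWord n σ → ∀ i, 1 ≤ i → i ≤ n (σ.length + 1) →
    b (σ ++ [i]) - a (σ ++ [i]) = c (σ.length + 1) * (b σ - a σ)
  gap_left : ∀ σ, ValidWord n σ →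
    a (σ ++ [1]) - a σ = η (σ.length + 1) 0
  gap_right : ∀ σ, ValidWord n σ →
    b σ - b (σ ++ [n (σ.length + 1)]) = η (σ.length + 1) (n (σ.length + 1))
  gap_mid : ∀ σ, ValidWord n σ → ∀ i, 1 ≤ i → i ≤ n (σ.length + 1) - 1 →
    a (σ ++ [i + 1]) - b (σ ++ [i]) = η (σ.length + 1) i

namespace HomogeneousPerfectStructure

variable {n : ℕ → ℕ} {c : ℕ → ℝ} {η : ℕ → ℕ → ℝ}

/-- `E_k`, the union of the basic intervals of order `k`. -/
def Ek (S : HomogeneousPerfectStructure n c η) (k : ℕ) : Set ℝ :=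
  ⋃ σ ∈ {σ : List ℕ | ValidWord n σ ∧ σ.length = k}, Icc (S.a σ) (S.b σ)

/-- The homogeneous perfect set `E = ⋂_{k ≥ 0} E_k`. -/
def E (S : HomogeneousPerfectStructure n c η) : Set ℝ := ⋂ k, S.Ek k

end HomogeneousPerfectStructure

/-- `max_{1 ≤ l ≤ n_k - 1} η_{k,l}`. -/
noncomputable def etaMax (n : ℕ → ℕ) (η : ℕ → ℕ → ℝ) (k : ℕ) : ℝ :=
  sSup (η k '' {l | 1 ≤ l ∧ l ≤ n k - 1})

/-- `min_{1 ≤ l ≤ n_k - 1} η_{k,l}`. -/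
noncomputable def etaMin (n : ℕ → ℕ) (η : ℕ → ℕ → ℝ) (k : ℕ) : ℝ :=
  sInf (η k '' {l | 1 ≤ l ∧ l ≤ n k - 1})

/-- A homeomorphism `f : ℝ → ℝ` is a 1-dimensional quasisymmetric mapping if there is a
homeomorphism `η : [0,∞) → [0,∞)` such that
`|f x - f a| / |f x - f b| ≤ η (|x - a| / |x - b|)` for all triples of distinct points. -/
def IsQuasisymmetric (f : ℝ ≃ₜ ℝ) : Prop :=
  ∃ h : (Set.Ici (0 : ℝ)) ≃ₜ (Set.Ici (0 : ℝ)),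
    ∀ a b x : ℝ, x ≠ a → x ≠ b → a ≠ b →
      |f x - f a| / |f x - f b| ≤
        (h ⟨|x - a| / |x - b|, Set.mem_Ici.mpr (div_nonneg (abs_nonneg _) (abs_nonneg _))⟩ : ℝ)

/-!
A quasisymmetric map of the line is monotone, and after a reflection it is an increasing `g`
satisfying the Beurling–Ahlfors condition. To bound `dim_H g(E)` from below by every `s < 1`, the
unit mass is spread over the basic intervals as follows: cut every interior gap at its midpoint,
so that the cells around the children of `J_σ` tile `J_σ`, and give a child the share
`|g(cell)| / |g(J_σ)|` of the mass of `J_σ`.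

The mass of `J_σ` then exceeds `|g(J_σ)| / |g([0,1])|` only by the product of the ratios
`|g(cell)| / |g(J)|` over `J_σ` and its ancestors `J ≠ [0,1]`, each with its own cell.
Comparability of the gaps gives `|cell| / |J| ≤ (n_k c_k)^{-4K}`, and for each `κ > 1` the
Beurling–Ahlfors condition bounds the distortion of nested intervals by `κ · (length ratio)^A`.
Hence the product is at most
`κ^k · (∏_{j ≤ k} n_j c_j)^{-4KA}`. As `dim_H E = 1`, the total length `∏_{j ≤ k} n_j c_j` decays
more slowly than any positive power of `|J_σ|`; also `|J_σ| ≤ 2^{-k}` and `κ` is arbitrary, so the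
product is `O(|J_σ|^{-ε})` for every `ε > 0`. Since `g` is Hölder continuous, this loss turns
`|g(J_σ)|` into `|g(J_σ)|^s`, and the mass distribution principle applies.
-/

/-! ### The Beurling–Ahlfors condition -/

/-- The Beurling–Ahlfors `M`-condition: `g` is increasing, and adjacent intervals of equal length
have images whose lengths are comparable up to the factor `M`. This is the form in which
quasisymmetry of an increasing map of the line is used. -/
structure BeurlingAhlfors (g : ℝ → ℝ) (M : ℝ) : Prop where
  strictMono : StrictMono g
  right_le : ∀ x t, 0 < t → g (x + t) - g x ≤ M * (g x - g (x - t))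
  left_le : ∀ x t, 0 < t → g x - g (x - t) ≤ M * (g (x + t) - g x)

lemma pow_rpow_logb {b x : ℝ} (hb : 0 < b) (hb_ne : b ≠ 1) (hx : 0 < x) (m : ℕ) :
    (b ^ m) ^ Real.logb b x = x ^ m := by
  rw [← Real.rpow_pow_comm hb.le, Real.rpow_logb hb hb_ne hx]

namespace BeurlingAhlfors

variable {g : ℝ → ℝ} {M : ℝ}

lemma sub_pos (hg : BeurlingAhlfors g M) {u v : ℝ} (huv : u < v) : 0 < g v - g u :=
  _root_.sub_pos.2 (hg.strictMono huv)

lemma sub_le_sub (hg : BeurlingAhlfors g M) {a b u v : ℝ} (hau : a ≤ u) (hvb : v ≤ b) :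
    g v - g u ≤ g b - g a :=
  _root_.sub_le_sub (hg.strictMono.monotone hvb) (hg.strictMono.monotone hau)

lemma one_le (hg : BeurlingAhlfors g M) : 1 ≤ M := by
  have hright := hg.right_le 0 1 one_pos
  have hleft := hg.left_le 0 1 one_pos
  have hpos_left := hg.sub_pos (show (0 : ℝ) - 1 < 0 by norm_num)
  have hpos_right := hg.sub_pos (show (0 : ℝ) < 0 + 1 by norm_num)
  by_contra! hM
  nlinarith

lemma sub_le_mul_left (hg : BeurlingAhlfors g M) {u v : ℝ} (huv : u < v) :
    g (v + (v - u)) - g v ≤ M * (g v - g u) := by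
  simpa only [sub_sub_cancel] using hg.right_le v (v - u) (_root_.sub_pos.2 huv)

lemma sub_le_mul_right (hg : BeurlingAhlfors g M) {u v : ℝ} (huv : u < v) :
    g u - g (u - (v - u)) ≤ M * (g v - g u) := by
  simpa only [add_sub_cancel] using hg.left_le u (v - u) (_root_.sub_pos.2 huv)

lemma sub_le_of_tripled (hg : BeurlingAhlfors g M) {u v : ℝ} (huv : u < v) :
    g (v + (v - u)) - g (u - (v - u)) ≤ (1 + 2 * M) * (g v - g u) := by
  linarith [hg.sub_le_mul_left huv, hg.sub_le_mul_right huv]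

lemma sub_le_pow_mul (hg : BeurlingAhlfors g M) {u v : ℝ} (huv : u < v) (N : ℕ) :
    g (v + (3 ^ N - 1) / 2 * (v - u)) - g (u - (3 ^ N - 1) / 2 * (v - u)) ≤
      (1 + 2 * M) ^ N * (g v - g u) := by
  have hM := hg.one_le
  induction N with
  | zero => simp
  | succ N ih =>
    set d := (3 ^ N - 1) / 2 * (v - u) with hd
    have hd_nonneg : 0 ≤ d :=
      mul_nonneg (by linarith [one_le_pow₀ (n := N) (show (1 : ℝ) ≤ 3 by norm_num)])
        (_root_.sub_pos.2 huv).le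
    have htriple := hg.sub_le_of_tripled (show u - d < v + d by linarith)
    calc g (v + (3 ^ (N + 1) - 1) / 2 * (v - u)) - g (u - (3 ^ (N + 1) - 1) / 2 * (v - u))
        = g (v + d + (v + d - (u - d))) - g (u - d - (v + d - (u - d))) := by
          congr 2 <;> rw [hd] <;> ring
      _ ≤ (1 + 2 * M) * ((1 + 2 * M) ^ N * (g v - g u)) := htriple.trans (by gcongr)
      _ = (1 + 2 * M) ^ (N + 1) * (g v - g u) := by ring

lemma exists_sub_le_rpow_mul (hg : BeurlingAhlfors g M) :
    ∃ C q : ℝ, 1 ≤ C ∧ 0 < q ∧ ∀ a b u v : ℝ, a ≤ u → u < v → v ≤ b →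
      g b - g a ≤ C * ((b - a) / (v - u)) ^ q * (g v - g u) := by
  have hM := hg.one_le
  set q := Real.logb 3 (1 + 2 * M)
  refine ⟨(1 + 2 * M) ^ 2, q, one_le_pow₀ (by linarith),
    Real.logb_pos (by norm_num) (by linarith), fun a b u v hau huv hvb ↦ ?_⟩
  have hl : 0 < v - u := _root_.sub_pos.2 huv
  set R := (b - a) / (v - u)
  have hba : b - a = R * (v - u) := (div_mul_cancel₀ _ hl.ne').symm
  have hR_one : 1 ≤ R := (one_le_div hl).2 (by linarith)
  obtain ⟨m, hmR, hRm⟩ := exists_nat_pow_near hR_one (show (1 : ℝ) < 3 by norm_num)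
  have hroom : b - a ≤ (3 ^ (m + 2) - 1) / 2 * (v - u) := by
    rw [hba]
    gcongr
    linarith [pow_succ (3 : ℝ) (m + 1)]
  have hpow : (1 + 2 * M) ^ m ≤ R ^ q := by
    calc (1 + 2 * M) ^ m = ((3 : ℝ) ^ m) ^ q :=
          (pow_rpow_logb (by norm_num) (by norm_num) (by linarith) m).symm
      _ ≤ R ^ q :=
          Real.rpow_le_rpow (by positivity) hmR (Real.logb_nonneg (by norm_num) (by linarith))
  calc g b - g a ≤ (1 + 2 * M) ^ (m + 2) * (g v - g u) :=
        (hg.sub_le_sub (by linarith) (by linarith)).trans (hg.sub_le_pow_mul huv (m + 2))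
    _ = (1 + 2 * M) ^ 2 * (1 + 2 * M) ^ m * (g v - g u) := by ring
    _ ≤ (1 + 2 * M) ^ 2 * R ^ q * (g v - g u) := by
        gcongr
        exact (hg.sub_pos huv).le

lemma exists_sub_dilation_le (hg : BeurlingAhlfors g M) {K : ℝ} (hK : 0 ≤ K) :
    ∃ C : ℝ, 0 < C ∧ ∀ u v : ℝ, u < v →
      g (v + K * (v - u)) - g (u - K * (v - u)) ≤ C * (g v - g u) := by
  obtain ⟨C, q, hC, -, hbound⟩ := hg.exists_sub_le_rpow_mul
  refine ⟨C * (2 * K + 1) ^ q, by positivity, fun u v huv ↦ ?_⟩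
  have hl : 0 < v - u := _root_.sub_pos.2 huv
  have hKl : 0 ≤ K * (v - u) := by positivity
  refine (hbound _ _ u v (by linarith) huv (by linarith)).trans_eq ?_
  rw [show v + K * (v - u) - (u - K * (v - u)) = (2 * K + 1) * (v - u) by ring,
    mul_div_cancel_right₀ _ hl.ne']

lemma exists_doubled_subinterval (hg : BeurlingAhlfors g M) {a b u v : ℝ} (hau : a ≤ u)
    (huv : u < v) (hvb : v ≤ b) (hlong : (v - u) * 3 ≤ b - a) :
    ∃ u' v', a ≤ u' ∧ v' ≤ b ∧ v' - u' = 2 * (v - u) ∧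
      g v - g u ≤ M / (1 + M) * (g v' - g u') := by
  have hM := hg.one_le
  rcases le_total (v - u) (b - v) with hright | hleft
  · refine ⟨u, v + (v - u), hau, by linarith, by ring, ?_⟩
    have hadj := hg.left_le v (v - u) (_root_.sub_pos.2 huv)
    rw [sub_sub_cancel] at hadj
    rw [div_mul_eq_mul_div, le_div_iff₀ (by linarith)]
    linarith
  · refine ⟨u - (v - u), v, by linarith, hvb, by ring, ?_⟩
    have hadj := hg.right_le u (v - u) (_root_.sub_pos.2 huv)
    rw [add_sub_cancel] at hadj
    rw [div_mul_eq_mul_div, le_div_iff₀ (by linarith)]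
    linarith

lemma sub_le_pow_mul_of_mul_pow_le (hg : BeurlingAhlfors g M) {a b u v : ℝ} (hau : a ≤ u)
    (huv : u ≤ v) (hvb : v ≤ b) {N : ℕ} (hlong : (v - u) * 3 ^ N ≤ b - a) :
    g v - g u ≤ (M / (1 + M)) ^ N * (g b - g a) := by
  have hM := hg.one_le
  rcases huv.eq_or_lt with rfl | huv
  · rw [sub_self]
    exact mul_nonneg (by positivity)
      (sub_nonneg.2 (hg.strictMono.monotone (hau.trans hvb)))
  induction N generalizing u v with
  | zero => simpa using hg.sub_le_sub hau hvb
  | succ N ih =>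
    have hl : 0 < v - u := _root_.sub_pos.2 huv
    have hpow := one_le_pow₀ (n := N) (show (1 : ℝ) ≤ 3 by norm_num)
    rw [pow_succ] at hlong
    obtain ⟨u', v', hau', hvb', hlen, hstep⟩ :=
      hg.exists_doubled_subinterval hau huv hvb (by nlinarith)
    have huv' : u' < v' := by linarith
    have hrest := ih hau' huv'.le hvb' (by rw [hlen]; nlinarith) huv'
    calc g v - g u ≤ M / (1 + M) * ((M / (1 + M)) ^ N * (g b - g a)) :=
          hstep.trans (by gcongr)
      _ = (M / (1 + M)) ^ (N + 1) * (g b - g a) := by ring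

lemma ratio_pos (hg : BeurlingAhlfors g M) : 0 < M / (1 + M) :=
  div_pos (by linarith [hg.one_le]) (by linarith [hg.one_le])

lemma ratio_lt_one (hg : BeurlingAhlfors g M) : M / (1 + M) < 1 :=
  (div_lt_one (by linarith [hg.one_le])).2 (by linarith)

lemma exists_sub_le_rpow (hg : BeurlingAhlfors g M) :
    ∃ C p : ℝ, 0 < C ∧ 0 < p ∧ ∀ a b u v : ℝ, a ≤ u → u < v → v ≤ b →
      g v - g u ≤ C * ((v - u) / (b - a)) ^ p * (g b - g a) := by
  have hθ := hg.ratio_pos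
  set θ := M / (1 + M)
  have hθ_inv : 1 < θ⁻¹ := (one_lt_inv₀ hθ).2 hg.ratio_lt_one
  set p := Real.logb 3 θ⁻¹
  have hp_pos : 0 < p := Real.logb_pos (by norm_num) hθ_inv
  refine ⟨θ⁻¹, p, by positivity, hp_pos, fun a b u v hau huv hvb ↦ ?_⟩
  have hl : 0 < v - u := _root_.sub_pos.2 huv
  set R := (b - a) / (v - u) with hR
  have hba : b - a = R * (v - u) := (div_mul_cancel₀ _ hl.ne').symm
  have hR_one : 1 ≤ R := (one_le_div hl).2 (by linarith)
  obtain ⟨m, hmR, hRm⟩ := exists_nat_pow_near hR_one (show (1 : ℝ) < 3 by norm_num)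
  have hRp : R ^ p ≤ (θ⁻¹) ^ (m + 1) := by
    calc R ^ p ≤ ((3 : ℝ) ^ (m + 1)) ^ p := by gcongr
      _ = (θ⁻¹) ^ (m + 1) :=
          pow_rpow_logb (by norm_num) (by norm_num) (by positivity) (m + 1)
  have hθm : θ ^ m ≤ θ⁻¹ * ((v - u) / (b - a)) ^ p := by
    rw [← inv_div (b - a), ← hR, Real.inv_rpow (by positivity)]
    calc θ ^ m = θ⁻¹ * ((θ⁻¹) ^ (m + 1))⁻¹ := by
          rw [inv_pow, inv_inv, pow_succ', inv_mul_cancel_left₀ hθ.ne']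
      _ ≤ θ⁻¹ * (R ^ p)⁻¹ := by gcongr
  have hm : (v - u) * 3 ^ m ≤ b - a := by
    rw [hba, mul_comm]
    gcongr
  exact (hg.sub_le_pow_mul_of_mul_pow_le hau huv.le hvb hm).trans
    (mul_le_mul_of_nonneg_right hθm (hg.sub_pos (by linarith)).le)

lemma exists_sub_le_mul_of_le_mul (hg : BeurlingAhlfors g M) {κ : ℝ} (hκ : 1 < κ) :
    ∃ ρ : ℝ, 1 < ρ ∧ ∀ a b u v : ℝ, a ≤ u → u < v → v ≤ b → b - a ≤ ρ * (v - u) →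
      g b - g a ≤ κ * (g v - g u) := by
  have hκ_inv : κ⁻¹ < 1 := inv_lt_one_of_one_lt₀ hκ
  obtain ⟨N, hN⟩ := exists_pow_lt_of_lt_one (show 0 < (1 - κ⁻¹) / 2 by linarith) hg.ratio_lt_one
  refine ⟨1 + (3 ^ N)⁻¹, lt_add_of_pos_right _ (by positivity),
    fun a b u v hau huv hvb hlen ↦ ?_⟩
  have hab : 0 < g b - g a := hg.sub_pos (by linarith)
  have hexcess : (b - a - (v - u)) * 3 ^ N ≤ b - a := by
    rw [← le_div_iff₀ (by positivity), div_eq_mul_inv]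
    have : (v - u) * ((3 : ℝ) ^ N)⁻¹ ≤ (b - a) * ((3 : ℝ) ^ N)⁻¹ := by gcongr
    linarith
  have hleft : g u - g a ≤ (1 - κ⁻¹) / 2 * (g b - g a) :=
    (hg.sub_le_pow_mul_of_mul_pow_le le_rfl hau (by linarith)
      (le_trans (mul_le_mul_of_nonneg_right (by linarith) (by positivity)) hexcess)).trans
      (by gcongr)
  have hright : g b - g v ≤ (1 - κ⁻¹) / 2 * (g b - g a) :=
    (hg.sub_le_pow_mul_of_mul_pow_le (by linarith) hvb le_rfl
      (le_trans (mul_le_mul_of_nonneg_right (by linarith) (by positivity)) hexcess)).trans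
      (by gcongr)
  have hkeep : κ⁻¹ * (g b - g a) ≤ g v - g u := by linarith
  rwa [inv_mul_le_iff₀ (by linarith)] at hkeep

-- Up to the relative length `ρ` the factor `κ` suffices; beyond it the constant `C` of the
-- polynomial bound is absorbed by `R ^ logb ρ C`.
lemma exists_sub_le_mul_rpow_mul (hg : BeurlingAhlfors g M) {κ : ℝ} (hκ : 1 < κ) :
    ∃ A : ℝ, 0 < A ∧ ∀ a b u v : ℝ, a ≤ u → u < v → v ≤ b →
      g b - g a ≤ κ * ((b - a) / (v - u)) ^ A * (g v - g u) := by
  obtain ⟨C, q, hC, hq, hfar⟩ := hg.exists_sub_le_rpow_mul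
  obtain ⟨ρ, hρ, hnear⟩ := hg.exists_sub_le_mul_of_le_mul hκ
  have hlog : 0 ≤ Real.logb ρ C := Real.logb_nonneg hρ hC
  refine ⟨q + Real.logb ρ C, by positivity, fun a b u v hau huv hvb ↦ ?_⟩
  have hl : 0 < v - u := _root_.sub_pos.2 huv
  have hΔ : 0 < g v - g u := hg.sub_pos huv
  set R := (b - a) / (v - u)
  have hR_one : 1 ≤ R := (one_le_div hl).2 (by linarith)
  rcases le_total R ρ with hRρ | hρR
  · refine (hnear a b u v hau huv hvb ((div_le_iff₀ hl).1 hRρ)).trans ?_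
    gcongr
    exact le_mul_of_one_le_right (by linarith) (Real.one_le_rpow hR_one (by positivity))
  · have hCR : C ≤ R ^ Real.logb ρ C := by
      calc C = ρ ^ Real.logb ρ C := (Real.rpow_logb (by linarith) hρ.ne' (by linarith)).symm
        _ ≤ R ^ Real.logb ρ C := by gcongr
    calc g b - g a ≤ C * R ^ q * (g v - g u) := hfar a b u v hau huv hvb
      _ ≤ R ^ Real.logb ρ C * R ^ q * (g v - g u) := by gcongr
      _ = 1 * R ^ (q + Real.logb ρ C) * (g v - g u) := by
          rw [Real.rpow_add (by linarith), one_mul, mul_comm (R ^ q)]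
      _ ≤ κ * R ^ (q + Real.logb ρ C) * (g v - g u) := by gcongr

lemma exists_rpow_neg_mul_sub_le_rpow (hg : BeurlingAhlfors g M) {a b s : ℝ} (hab : a < b)
    (hs : s < 1) :
    ∃ ε C : ℝ, 0 < ε ∧ 0 < C ∧ ∀ u v : ℝ, a ≤ u → u < v → v ≤ b →
      (v - u) ^ (-ε) * (g v - g u) ≤ C * (g v - g u) ^ s := by
  obtain ⟨D, p, hD, hp, hholder⟩ := hg.exists_sub_le_rpow
  have hba : 0 < b - a := _root_.sub_pos.2 hab
  set B := D / (b - a) ^ p * (g b - g a) with hB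
  have hB_pos : 0 < B := mul_pos (by positivity) (hg.sub_pos hab)
  refine ⟨p * (1 - s), B ^ (1 - s), mul_pos hp (by linarith), by positivity,
    fun u v hau huv hvb ↦ ?_⟩
  have hl : 0 < v - u := _root_.sub_pos.2 huv
  have hΔ : 0 < g v - g u := hg.sub_pos huv
  have hΔ_le : g v - g u ≤ B * (v - u) ^ p := by
    refine (hholder a b u v hau huv hvb).trans_eq ?_
    rw [Real.div_rpow hl.le hba.le, hB]
    ring
  calc (v - u) ^ (-(p * (1 - s))) * (g v - g u)
      = (v - u) ^ (-(p * (1 - s))) * ((g v - g u) ^ (1 - s) * (g v - g u) ^ s) := by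
        rw [← Real.rpow_add hΔ, sub_add_cancel, Real.rpow_one]
    _ ≤ (v - u) ^ (-(p * (1 - s))) * ((B * (v - u) ^ p) ^ (1 - s) * (g v - g u) ^ s) := by
        gcongr
    _ = B ^ (1 - s) * (g v - g u) ^ s := by
        rw [Real.mul_rpow hB_pos.le (by positivity), ← Real.rpow_mul hl.le, Real.rpow_neg hl.le]
        field_simp

end BeurlingAhlfors

/-! ### Covers of null sets -/

lemma exists_Ioo_superset_rpow_le {s : ℝ} (hs : 0 < s) {A : Set ℝ} (hA : Metric.ediam A ≠ ⊤)
    {ε : ℝ≥0∞} (hε : ε ≠ 0) :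
    ∃ x y, x < y ∧ A ⊆ Ioo x y ∧ ENNReal.ofReal ((y - x) ^ s) ≤ Metric.ediam A ^ s + ε := by
  have hbdd : Bornology.IsBounded A := Metric.isBounded_iff_ediam_ne_top.2 hA
  have hdiam : 0 ≤ sSup A - sInf A :=
    sub_nonneg.2 (Real.sInf_le_sSup A hbdd.bddBelow hbdd.bddAbove)
  have hcont : Continuous fun r : ℝ ↦ ENNReal.ofReal ((sSup A - sInf A + 2 * r) ^ s) :=
    ENNReal.continuous_ofReal.comp (by fun_prop (disch := exact hs.le))
  have hlt : ENNReal.ofReal ((sSup A - sInf A + 2 * 0) ^ s) < Metric.ediam A ^ s + ε := by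
    rw [mul_zero, add_zero, ← ENNReal.ofReal_rpow_of_nonneg hdiam hs.le, ← Real.ediam_eq hbdd]
    exact ENNReal.lt_add_right (ENNReal.rpow_ne_top_of_nonneg hs.le hA) hε
  have hnear := ((hcont.tendsto 0).eventually_lt_const hlt).filter_mono
    (nhdsWithin_le_nhds (s := Ioi 0))
  obtain ⟨r, hsmall, hr : 0 < r⟩ := (hnear.and self_mem_nhdsWithin).exists
  refine ⟨sInf A - r, sSup A + r, by linarith, fun w hw ↦ ⟨?_, ?_⟩, ?_⟩
  · linarith [csInf_le hbdd.bddBelow hw]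
  · linarith [le_csSup hbdd.bddAbove hw]
  · rw [show sSup A + r - (sInf A - r) = sSup A - sInf A + 2 * r by ring]
    exact hsmall.le

lemma exists_cover_of_hausdorffMeasure_eq_zero {X : Type*} [EMetricSpace X] [MeasurableSpace X]
    [BorelSpace X] {s : ℝ} {A : Set X} (hA : μH[s] A = 0) {ε : ℝ≥0∞}
    (hε : ε ≠ 0) :
    ∃ t : ℕ → Set X, A ⊆ ⋃ i, t i ∧ (∀ i, Metric.ediam (t i) ≤ 1) ∧
      ∑' i, ⨆ _ : (t i).Nonempty, Metric.ediam (t i) ^ s < ε := by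
  rw [Measure.hausdorffMeasure_apply, ENNReal.iSup_eq_zero] at hA
  have hinf := ENNReal.iSup_eq_zero.1 (hA 1) one_pos
  have hlt := hinf.trans_lt (pos_iff_ne_zero.2 hε)
  simpa only [iInf_lt_iff, exists_prop] using hlt

lemma exists_Ioo_cover_of_hausdorffMeasure_eq_zero {s : ℝ} (hs : 0 < s) {A : Set ℝ}
    (hA : μH[s] A = 0) {ε : ℝ≥0∞} (hε : ε ≠ 0) :
    ∃ x y : ℕ → ℝ, (∀ i, x i < y i) ∧ A ⊆ ⋃ i, Ioo (x i) (y i) ∧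
      ∑' i, ENNReal.ofReal ((y i - x i) ^ s) < ε := by
  have hhalf : ε / 2 ≠ 0 := ENNReal.div_ne_zero.2 ⟨hε, ENNReal.ofNat_ne_top⟩
  obtain ⟨t, hcover, hdiam, hsum⟩ := exists_cover_of_hausdorffMeasure_eq_zero hA hhalf
  obtain ⟨δ, hδ, hδ_sum⟩ := ENNReal.exists_pos_sum_of_countable' hhalf ℕ
  choose x y hxy hsub hle using fun i ↦ exists_Ioo_superset_rpow_le hs
    (ne_top_of_le_ne_top ENNReal.one_ne_top (hdiam i)) (hδ i).ne'
  have hterm : ∀ i, Metric.ediam (t i) ^ s = ⨆ _ : (t i).Nonempty, Metric.ediam (t i) ^ s := by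
    intro i
    rcases (t i).eq_empty_or_nonempty with hempty | hne
    · simp [hempty, hs]
    · simp [hne]
  refine ⟨x, y, hxy, hcover.trans (iUnion_mono hsub), ?_⟩
  calc ∑' i, ENNReal.ofReal ((y i - x i) ^ s)
      ≤ ∑' i, ((⨆ _ : (t i).Nonempty, Metric.ediam (t i) ^ s) + δ i) :=
        ENNReal.tsum_le_tsum fun i ↦ hterm i ▸ hle i
    _ < ε / 2 + ε / 2 := by
        rw [ENNReal.tsum_add]
        exact ENNReal.add_lt_add hsum hδ_sum
    _ = ε := ENNReal.add_halves ε

/-! ### Words, cells and gaps -/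

lemma validWord_append_singleton {n : ℕ → ℕ} {σ : List ℕ} {i : ℕ} :
    ValidWord n (σ ++ [i]) ↔ ValidWord n σ ∧ 1 ≤ i ∧ i ≤ n (σ.length + 1) := by
  simp only [ValidWord, List.length_append, List.length_singleton, List.get_eq_getElem]
  refine ⟨fun h ↦ ⟨fun j hj ↦ ?_, ?_⟩, fun ⟨h, hi⟩ j hj ↦ ?_⟩
  · simpa only [List.getElem_append_left hj] using h j (by omega)
  · simpa only [List.getElem_concat_length] using h σ.length (by omega)
  · rcases Nat.lt_succ_iff_lt_or_eq.1 hj with hj | rfl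
    · simpa only [List.getElem_append_left hj] using h j hj
    · simpa only [List.getElem_concat_length] using hi

/-- The index set `Ω_k` of the basic intervals of order `k`, as a finite set. -/
def words (n : ℕ → ℕ) : ℕ → Finset (List ℕ)
  | 0 => {[]}
  | k + 1 => (words n k ×ˢ Finset.range (n (k + 1))).map
      ⟨fun q ↦ q.1 ++ [q.2 + 1], fun q r h ↦ by
        obtain ⟨hword, hletter⟩ := List.append_inj' h rfl
        exact Prod.ext hword (by simpa using hletter)⟩

section Words

variable {n : ℕ → ℕ} {k : ℕ}

lemma mem_words_succ {τ : List ℕ} :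
    τ ∈ words n (k + 1) ↔ ∃ σ ∈ words n k, ∃ i < n (k + 1), σ ++ [i + 1] = τ := by
  simp only [words, Finset.mem_map, Finset.mem_product, Finset.mem_range, Prod.exists,
    and_assoc, exists_and_left]
  rfl

lemma append_mem_words {σ : List ℕ} (hσ : σ ∈ words n k) {i : ℕ} (hi : i < n (k + 1)) :
    σ ++ [i + 1] ∈ words n (k + 1) :=
  mem_words_succ.2 ⟨σ, hσ, i, hi, rfl⟩

lemma mem_words {σ : List ℕ} : σ ∈ words n k ↔ ValidWord n σ ∧ σ.length = k := by
  induction k generalizing σ with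
  | zero =>
    simp only [words, Finset.mem_singleton, List.length_eq_zero_iff, iff_and_self]
    rintro rfl j hj
    exact absurd hj (Nat.not_lt_zero j)
  | succ k ih =>
    rw [mem_words_succ]
    constructor
    · rintro ⟨σ, hσ, i, hi, rfl⟩
      obtain ⟨hvalid, rfl⟩ := ih.1 hσ
      exact ⟨validWord_append_singleton.2 ⟨hvalid, by omega, by omega⟩, by simp⟩
    · rintro ⟨hvalid, hlength⟩
      obtain rfl | ⟨ρ, i, rfl⟩ := σ.eq_nil_or_concat'
      · simp at hlength
      · obtain ⟨hρ, hi_pos, hi_le⟩ := validWord_append_singleton.1 hvalid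
        obtain rfl : ρ.length = k := by simpa using hlength
        exact ⟨ρ, ih.2 ⟨hρ, rfl⟩, i - 1, by omega, by rw [Nat.sub_add_cancel hi_pos]⟩

lemma sum_words_succ {N : Type*} [AddCommMonoid N] (F : List ℕ → N) :
    ∑ τ ∈ words n (k + 1), F τ =
      ∑ σ ∈ words n k, ∑ i ∈ Finset.range (n (k + 1)), F (σ ++ [i + 1]) := by
  rw [words, Finset.sum_map, Finset.sum_product]
  rfl

lemma card_words (n : ℕ → ℕ) (k : ℕ) : (words n k).card = ∏ j ∈ Finset.range k, n (j + 1) := by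
  induction k with
  | zero => rfl
  | succ k ih =>
    rw [words, Finset.card_map, Finset.card_product, Finset.card_range, ih,
      Finset.prod_range_succ]

end Words

/-- The common length `c₁ ⋯ c_k` of the basic intervals of order `k`. -/
noncomputable def basicLength (c : ℕ → ℝ) (k : ℕ) : ℝ := ∏ j ∈ Finset.range k, c (j + 1)

/-- The total length `n₁ c₁ ⋯ n_k c_k` of the basic intervals of order `k`. -/
noncomputable def totalLength (n : ℕ → ℕ) (c : ℕ → ℝ) (k : ℕ) : ℝ :=
  (words n k).card * basicLength c k

/-- All gaps of order `k`, including the two at the ends, are at most `K` times the smallest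
interior gap of order `k`. -/
structure ComparableGaps (n : ℕ → ℕ) (η : ℕ → ℕ → ℝ) (K : ℝ) : Prop where
  one_le : 1 ≤ K
  gap_le : ∀ k j, 1 ≤ k → j ≤ n k → η k j ≤ K * etaMin n η k

lemma basicLength_succ (c : ℕ → ℝ) (k : ℕ) :
    basicLength c (k + 1) = c (k + 1) * basicLength c k := by
  rw [basicLength, basicLength, Finset.prod_range_succ, mul_comm]

lemma totalLength_zero (n : ℕ → ℕ) (c : ℕ → ℝ) : totalLength n c 0 = 1 := by
  simp [totalLength, basicLength, words]

lemma totalLength_succ (n : ℕ → ℕ) (c : ℕ → ℝ) (k : ℕ) :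
    totalLength n c (k + 1) = n (k + 1) * c (k + 1) * totalLength n c k := by
  rw [totalLength, totalLength, basicLength_succ, card_words, card_words, Finset.prod_range_succ]
  push_cast
  ring

lemma etaMin_le {n : ℕ → ℕ} {η : ℕ → ℕ → ℝ} {k i : ℕ} (hi_one : 1 ≤ i) (hi : i < n k) :
    etaMin n η k ≤ η k i :=
  csInf_le (((finite_Icc 1 (n k - 1)).image (η k)).bddBelow)
    (mem_image_of_mem _ ⟨hi_one, by omega⟩)

lemma comparableGaps_of_div_le {n : ℕ → ℕ} {η : ℕ → ℕ → ℝ} {L c : ℝ} (hL : 1 ≤ L)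
    (hn : ∀ k, 1 ≤ k → 2 ≤ n k) (hη : ∀ k j, 1 ≤ k → j ≤ n k → 0 ≤ η k j)
    (hratio : ∀ k, 1 ≤ k → ∀ i j, 1 ≤ i → i ≤ n k - 1 → 1 ≤ j → j ≤ n k - 1 →
      1 / L ≤ η k i / η k j ∧ η k i / η k j ≤ L)
    (hedge : ∀ k, 1 ≤ k → ∀ i, 1 ≤ i → i ≤ n k - 1 → η k 0 + η k (n k) ≤ c * η k i) :
    ComparableGaps n η (max L c) where
  one_le := hL.trans (le_max_left _ _)
  gap_le k j hk hj := by
    have hn_k := hn k hk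
    have hK : 0 < max L c := (zero_lt_one.trans_le hL).trans_le (le_max_left _ _)
    rw [← div_le_iff₀' hK]
    refine le_csInf ⟨_, mem_image_of_mem _ ⟨le_rfl, by omega⟩⟩ ?_
    rintro _ ⟨i, ⟨hi_one, hi_le⟩, rfl⟩
    have hi := hη k i hk (by omega)
    have hi_ne : η k i ≠ 0 := fun h ↦ by
      have hinv := (hratio k hk i i hi_one hi_le hi_one hi_le).1
      rw [h, div_zero] at hinv
      exact absurd hinv (not_le.2 (by positivity))
    rw [div_le_iff₀' hK]
    by_cases hj_edge : j = 0 ∨ j = n k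
    · have hj_le : η k j ≤ c * η k i := by
        have h0 := hη k 0 hk (by omega)
        have hlast := hη k (n k) hk le_rfl
        have hsum := hedge k hk i hi_one hi_le
        rcases hj_edge with rfl | rfl <;> linarith
      exact hj_le.trans (by gcongr; exact le_max_right _ _)
    · have hj_le : η k j ≤ L * η k i :=
        (div_le_iff₀ (hi.lt_of_ne' hi_ne)).1
          (hratio k hk j i (by omega) (by omega) hi_one hi_le).2
      exact hj_le.trans (by gcongr; exact le_max_left _ _)

/-- The distance from the left end of the `i`-th child of a basic interval of order `k - 1` to
the left end of its cell: the cells cut every interior gap at its midpoint. -/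
noncomputable def leftMargin (η : ℕ → ℕ → ℝ) (k i : ℕ) : ℝ :=
  if i = 1 then η k 0 else η k (i - 1) / 2

/-- The counterpart of `leftMargin` at the right end of the `i`-th child. -/
noncomputable def rightMargin (n : ℕ → ℕ) (η : ℕ → ℕ → ℝ) (k i : ℕ) : ℝ :=
  if i = n k then η k (n k) else η k i / 2

namespace HomogeneousPerfectStructure

variable {n : ℕ → ℕ} {c : ℕ → ℝ} {η : ℕ → ℕ → ℝ}

lemma words_nonempty (S : HomogeneousPerfectStructure n c η) (k : ℕ) : (words n k).Nonempty := by
  induction k with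
  | zero => exact Finset.singleton_nonempty _
  | succ k ih =>
    obtain ⟨σ, hσ⟩ := ih
    exact ⟨_, append_mem_words hσ (zero_lt_two.trans_le (S.hn (k + 1) (by omega)))⟩

lemma basicLength_pos (S : HomogeneousPerfectStructure n c η) (k : ℕ) : 0 < basicLength c k :=
  Finset.prod_pos fun j _ ↦ (S.hc (j + 1) (by omega)).1

lemma totalLength_pos (S : HomogeneousPerfectStructure n c η) (k : ℕ) : 0 < totalLength n c k :=
  mul_pos (by exact_mod_cast (S.words_nonempty k).card_pos) (S.basicLength_pos k)

lemma etaMin_nonneg (S : HomogeneousPerfectStructure n c η) {k : ℕ} (hk : 1 ≤ k) :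
    0 ≤ etaMin n η k := by
  refine Real.sInf_nonneg ?_
  rintro _ ⟨i, ⟨-, hi⟩, rfl⟩
  exact S.hη k i hk (by omega)

/-- The left end of the cell around `J_σ`. The cells around the children of a basic interval
`J` cover `J` without overlap, and inherit the mass of `J` in proportion to the lengths of
their images. -/
noncomputable def cellLeft (S : HomogeneousPerfectStructure n c η) (σ : List ℕ) : ℝ :=
  S.a σ - leftMargin η σ.length (σ.getLastD 0)

/-- The right end of the cell around `J_σ`. -/
noncomputable def cellRight (S : HomogeneousPerfectStructure n c η) (σ : List ℕ) : ℝ :=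
  S.b σ + rightMargin n η σ.length (σ.getLastD 0)

section Words

variable {S : HomogeneousPerfectStructure n c η} {k : ℕ} {σ : List ℕ} {i : ℕ}

lemma b_sub_a (hσ : σ ∈ words n k) : S.b σ - S.a σ = basicLength c k := by
  induction k generalizing σ with
  | zero =>
    obtain rfl := Finset.mem_singleton.1 hσ
    simp [basicLength, S.root_a, S.root_b]
  | succ k ih =>
    obtain ⟨ρ, hρ, i, hi, rfl⟩ := mem_words_succ.1 hσ
    obtain ⟨hvalid, rfl⟩ := mem_words.1 hρ
    rw [S.len_eq ρ hvalid (i + 1) (by omega) hi, ih hρ, basicLength_succ]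

lemma a_lt_b (hσ : σ ∈ words n k) : S.a σ < S.b σ := by
  rw [← sub_pos, b_sub_a hσ]
  exact S.basicLength_pos k

lemma a_le_a_append (hσ : σ ∈ words n k) (hi : i < n (k + 1)) : S.a σ ≤ S.a (σ ++ [i + 1]) := by
  obtain ⟨hvalid, rfl⟩ := mem_words.1 hσ
  exact S.sub_left σ hvalid (i + 1) (by omega) hi

lemma b_append_le_b (hσ : σ ∈ words n k) (hi : i < n (k + 1)) : S.b (σ ++ [i + 1]) ≤ S.b σ := by
  obtain ⟨hvalid, rfl⟩ := mem_words.1 hσ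
  exact S.sub_right σ hvalid (i + 1) (by omega) hi

lemma cellLeft_append (σ : List ℕ) (i : ℕ) :
    S.cellLeft (σ ++ [i]) = S.a (σ ++ [i]) - leftMargin η (σ.length + 1) i := by
  simp only [cellLeft, List.length_append, List.length_singleton, List.getLastD_concat]

lemma cellRight_append (σ : List ℕ) (i : ℕ) :
    S.cellRight (σ ++ [i]) = S.b (σ ++ [i]) + rightMargin n η (σ.length + 1) i := by
  simp only [cellRight, List.length_append, List.length_singleton, List.getLastD_concat]

lemma cellLeft_first (hσ : σ ∈ words n k) : S.cellLeft (σ ++ [1]) = S.a σ := by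
  have hgap := S.gap_left σ (mem_words.1 hσ).1
  rw [cellLeft_append, leftMargin, if_pos rfl, ← hgap, sub_sub_cancel]

lemma cellRight_last (hσ : σ ∈ words n k) : S.cellRight (σ ++ [n (k + 1)]) = S.b σ := by
  obtain ⟨hvalid, rfl⟩ := mem_words.1 hσ
  have hgap := S.gap_right σ hvalid
  rw [cellRight_append, rightMargin, if_pos rfl, ← hgap, add_sub_cancel]

lemma cellRight_eq_cellLeft_next (hσ : σ ∈ words n k) (hi : i + 1 < n (k + 1)) :
    S.cellRight (σ ++ [i + 1]) = S.cellLeft (σ ++ [i + 1 + 1]) := by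
  obtain ⟨hvalid, rfl⟩ := mem_words.1 hσ
  have hgap := S.gap_mid σ hvalid (i + 1) (by omega) (by omega)
  rw [cellRight_append, cellLeft_append, rightMargin, leftMargin, if_neg hi.ne,
    if_neg (by omega), Nat.add_sub_cancel]
  linarith

lemma sum_cells_eq (φ : ℝ → ℝ) (hσ : σ ∈ words n k) :
    ∑ i ∈ Finset.range (n (k + 1)),
      (φ (S.cellRight (σ ++ [i + 1])) - φ (S.cellLeft (σ ++ [i + 1]))) =
        φ (S.b σ) - φ (S.a σ) := by
  have hpartial : ∀ j, j < n (k + 1) → ∑ i ∈ Finset.range (j + 1),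
      (φ (S.cellRight (σ ++ [i + 1])) - φ (S.cellLeft (σ ++ [i + 1]))) =
        φ (S.cellRight (σ ++ [j + 1])) - φ (S.a σ) := by
    intro j hj
    induction j with
    | zero => rw [Finset.sum_range_one, zero_add, cellLeft_first hσ]
    | succ j ih =>
      rw [Finset.sum_range_succ, ih (by omega), cellRight_eq_cellLeft_next hσ hj]
      ring
  have hn := S.hn (k + 1) (by omega)
  have htotal := hpartial (n (k + 1) - 1) (by omega)
  rwa [Nat.sub_add_cancel (by omega), cellRight_last hσ] at htotal

lemma cellLeft_le_a (hσ : σ ∈ words n (k + 1)) : S.cellLeft σ ≤ S.a σ := by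
  obtain ⟨ρ, hρ, i, hi, rfl⟩ := mem_words_succ.1 hσ
  obtain ⟨-, rfl⟩ := mem_words.1 hρ
  rw [cellLeft_append, sub_le_self_iff, leftMargin]
  have h0 := S.hη (ρ.length + 1) 0 (by omega) (by omega)
  have hgap := S.hη (ρ.length + 1) i (by omega) (by omega)
  split_ifs
  exacts [h0, div_nonneg hgap zero_le_two]

lemma b_le_cellRight (hσ : σ ∈ words n (k + 1)) : S.b σ ≤ S.cellRight σ := by
  obtain ⟨ρ, hρ, i, hi, rfl⟩ := mem_words_succ.1 hσ
  obtain ⟨-, rfl⟩ := mem_words.1 hρ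
  rw [cellRight_append, le_add_iff_nonneg_right, rightMargin]
  have hlast := S.hη (ρ.length + 1) (n (ρ.length + 1)) (by omega) le_rfl
  have hgap := S.hη (ρ.length + 1) (i + 1) (by omega) hi
  split_ifs
  exacts [hlast, div_nonneg hgap zero_le_two]

lemma cellLeft_lt_cellRight (hσ : σ ∈ words n (k + 1)) : S.cellLeft σ < S.cellRight σ :=
  (cellLeft_le_a hσ).trans_lt ((a_lt_b hσ).trans_le (b_le_cellRight hσ))

lemma cellRight_sub_cellLeft (hσ : σ ∈ words n k) (hi : i < n (k + 1)) :
    S.cellRight (σ ++ [i + 1]) - S.cellLeft (σ ++ [i + 1]) = basicLength c (k + 1) +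
      (leftMargin η (k + 1) (i + 1) + rightMargin n η (k + 1) (i + 1)) := by
  rw [cellRight_append, cellLeft_append, (mem_words.1 hσ).2, ← b_sub_a (append_mem_words hσ hi)]
  ring

-- Since `n_k ≥ 2`, at least one side of every cell borders on an interior gap.
lemma le_cellRight_sub_cellLeft (hσ : σ ∈ words n (k + 1)) :
    basicLength c (k + 1) + etaMin n η (k + 1) / 2 ≤ S.cellRight σ - S.cellLeft σ := by
  obtain ⟨ρ, hρ, i, hi, rfl⟩ := mem_words_succ.1 hσ
  have hn := S.hn (k + 1) (by omega)
  have hm := S.etaMin_nonneg (k := k + 1) (by omega)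
  have h0 := S.hη (k + 1) 0 (by omega) (by omega)
  have hlast := S.hη (k + 1) (n (k + 1)) (by omega) le_rfl
  rw [cellRight_sub_cellLeft hρ hi, leftMargin, rightMargin, Nat.add_sub_cancel]
  have hleft : i + 1 ≠ 1 → etaMin n η (k + 1) ≤ η (k + 1) i := fun h ↦
    etaMin_le (by omega) hi
  have hright : i + 1 ≠ n (k + 1) → etaMin n η (k + 1) ≤ η (k + 1) (i + 1) := fun h ↦
    etaMin_le (by omega) (by omega)
  split_ifs with hfirst hlast_word hlast_word
  · omega
  · linarith [hright hlast_word]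
  · linarith [hleft hfirst]
  · linarith [hleft hfirst, hright hlast_word]

lemma cellRight_sub_cellLeft_le {K : ℝ} (hgaps : ComparableGaps n η K)
    (hσ : σ ∈ words n (k + 1)) :
    S.cellRight σ - S.cellLeft σ ≤
      basicLength c (k + 1) + 2 * K * etaMin n η (k + 1) := by
  obtain ⟨ρ, hρ, i, hi, rfl⟩ := mem_words_succ.1 hσ
  have hgap : ∀ j ≤ n (k + 1), 0 ≤ η (k + 1) j ∧ η (k + 1) j ≤ K * etaMin n η (k + 1) :=
    fun j hj ↦ ⟨S.hη (k + 1) j (by omega) hj, hgaps.gap_le (k + 1) j (by omega) hj⟩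
  have hleft : leftMargin η (k + 1) (i + 1) ≤ K * etaMin n η (k + 1) := by
    rw [leftMargin, Nat.add_sub_cancel]
    split_ifs
    exacts [(hgap 0 (by omega)).2, (half_le_self (hgap i hi.le).1).trans (hgap i hi.le).2]
  have hright : rightMargin n η (k + 1) (i + 1) ≤ K * etaMin n η (k + 1) := by
    rw [rightMargin]
    split_ifs
    exacts [(hgap _ le_rfl).2, (half_le_self (hgap (i + 1) hi).1).trans (hgap (i + 1) hi).2]
  rw [cellRight_sub_cellLeft hρ hi]
  linarith

end Words

lemma card_children_mul_le (S : HomogeneousPerfectStructure n c η) (k : ℕ) :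
    n (k + 1) * (basicLength c (k + 1) + etaMin n η (k + 1) / 2) ≤ basicLength c k := by
  obtain ⟨σ, hσ⟩ := S.words_nonempty k
  have hsum := Finset.card_nsmul_le_sum (Finset.range (n (k + 1)))
    (fun i ↦ S.cellRight (σ ++ [i + 1]) - S.cellLeft (σ ++ [i + 1]))
    (basicLength c (k + 1) + etaMin n η (k + 1) / 2)
    fun i hi ↦ le_cellRight_sub_cellLeft (append_mem_words hσ (Finset.mem_range.1 hi))
  have hcells := sum_cells_eq (S := S) id hσ
  simp only [id_eq] at hcells
  rwa [Finset.card_range, nsmul_eq_mul, hcells, b_sub_a hσ] at hsum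

lemma basicLength_succ_le_half (S : HomogeneousPerfectStructure n c η) (k : ℕ) :
    basicLength c (k + 1) ≤ basicLength c k / 2 := by
  have hn : (2 : ℝ) ≤ n (k + 1) := by exact_mod_cast S.hn (k + 1) (by omega)
  have hm := S.etaMin_nonneg (k := k + 1) (by omega)
  have hδ := S.basicLength_pos (k + 1)
  have hchildren := S.card_children_mul_le k
  nlinarith

lemma basicLength_le_half_pow (S : HomogeneousPerfectStructure n c η) (k : ℕ) :
    basicLength c k ≤ (1 / 2) ^ k := by
  induction k with
  | zero => simp [basicLength]
  | succ k ih =>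
    rw [pow_succ]
    linarith [S.basicLength_succ_le_half k]

lemma basicLength_le_one (S : HomogeneousPerfectStructure n c η) (k : ℕ) :
    basicLength c k ≤ 1 :=
  (S.basicLength_le_half_pow k).trans (pow_le_one₀ (by norm_num) (by norm_num))

lemma tendsto_basicLength (S : HomogeneousPerfectStructure n c η) :
    Tendsto (basicLength c) atTop (nhds 0) :=
  squeeze_zero (fun k ↦ (S.basicLength_pos k).le) S.basicLength_le_half_pow
    (tendsto_pow_atTop_nhds_zero_of_lt_one (by norm_num) (by norm_num))

lemma a_nonneg_and_b_le_one {S : HomogeneousPerfectStructure n c η} {k : ℕ} {σ : List ℕ}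
    (hσ : σ ∈ words n k) : 0 ≤ S.a σ ∧ S.b σ ≤ 1 := by
  induction k generalizing σ with
  | zero =>
    obtain rfl := Finset.mem_singleton.1 hσ
    exact ⟨S.root_a.ge, S.root_b.le⟩
  | succ k ih =>
    obtain ⟨ρ, hρ, i, hi, rfl⟩ := mem_words_succ.1 hσ
    exact ⟨(ih hρ).1.trans (a_le_a_append hρ hi), (b_append_le_b hρ hi).trans (ih hρ).2⟩

lemma sum_intervals_le (S : HomogeneousPerfectStructure n c η) {ψ : ℝ → ℝ}
    (hψ : Monotone ψ) (k : ℕ) :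
    ∑ σ ∈ words n k, (ψ (S.b σ) - ψ (S.a σ)) ≤ ψ 1 - ψ 0 := by
  induction k with
  | zero => simp [words, S.root_a, S.root_b]
  | succ k ih =>
    rw [sum_words_succ]
    refine (Finset.sum_le_sum fun σ hσ ↦ ?_).trans ih
    rw [← sum_cells_eq ψ hσ]
    refine Finset.sum_le_sum fun i hi ↦ ?_
    have hτ := append_mem_words hσ (Finset.mem_range.1 hi)
    exact sub_le_sub (hψ (b_le_cellRight hτ)) (hψ (cellLeft_le_a hτ))

-- Replacing `φ` by `φ` composed with the projection onto `[x, y]` turns the bound into a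
-- telescoping sum over all cells.
lemma sum_cells_le {S : HomogeneousPerfectStructure n c η} {φ : ℝ → ℝ} (hφ : Monotone φ)
    {k : ℕ} {x y : ℝ} (hxy : x ≤ y) {T : Finset (List ℕ)} (hT : T ⊆ words n (k + 1))
    (hcells : ∀ τ ∈ T, x ≤ S.cellLeft τ ∧ S.cellRight τ ≤ y) :
    ∑ τ ∈ T, (φ (S.cellRight τ) - φ (S.cellLeft τ)) ≤ φ y - φ x := by
  let ψ : ℝ → ℝ := fun t ↦ φ (projIcc x y hxy t)
  have hψ : Monotone ψ := fun s t hst ↦ hφ (monotone_projIcc hxy hst)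
  have hψ_eq : ∀ t ∈ Icc x y, ψ t = φ t := fun t ht ↦ by
    simp only [ψ, projIcc_of_mem hxy ht]
  calc ∑ τ ∈ T, (φ (S.cellRight τ) - φ (S.cellLeft τ))
      = ∑ τ ∈ T, (ψ (S.cellRight τ) - ψ (S.cellLeft τ)) :=
        Finset.sum_congr rfl fun τ hτ ↦ by
          have hlt : S.cellLeft τ < S.cellRight τ := cellLeft_lt_cellRight (hT hτ)
          obtain ⟨hleft, hright⟩ := hcells τ hτ
          rw [hψ_eq _ ⟨by linarith, hright⟩, hψ_eq _ ⟨hleft, by linarith⟩]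
    _ ≤ ∑ τ ∈ words n (k + 1), (ψ (S.cellRight τ) - ψ (S.cellLeft τ)) :=
        Finset.sum_le_sum_of_subset_of_nonneg hT fun τ hτ _ ↦
          sub_nonneg.2 (hψ (cellLeft_lt_cellRight hτ).le)
    _ = ∑ σ ∈ words n k, (ψ (S.b σ) - ψ (S.a σ)) := by
        rw [sum_words_succ]
        exact Finset.sum_congr rfl fun σ hσ ↦ sum_cells_eq ψ hσ
    _ ≤ ψ 1 - ψ 0 := S.sum_intervals_le hψ k
    _ ≤ φ y - φ x := sub_le_sub (hφ (projIcc x y hxy 1).2.2) (hφ (projIcc x y hxy 0).2.1)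

-- The gaps are bounded through the room that the children leave free: with
-- `t = (n_{k+1} c_{k+1})⁻¹` the cells have relative length at most `1 + 4 K (t - 1)`, and
-- Bernoulli's inequality turns this into a power of `t`.
lemma cell_div_le_rpow {S : HomogeneousPerfectStructure n c η} {K : ℝ}
    (hgaps : ComparableGaps n η K) {k : ℕ} {τ : List ℕ} (hτ : τ ∈ words n (k + 1)) :
    (S.cellRight τ - S.cellLeft τ) / (S.b τ - S.a τ) ≤
      ((n (k + 1) * c (k + 1) : ℝ)⁻¹) ^ (4 * K) := by
  have hK := hgaps.one_le
  have hc : 0 < c (k + 1) := (S.hc (k + 1) (by omega)).1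
  have hn : (2 : ℝ) ≤ n (k + 1) := by exact_mod_cast S.hn (k + 1) (by omega)
  have hδ := S.basicLength_pos k
  have hδ' := S.basicLength_pos (k + 1)
  set t : ℝ := (n (k + 1) * c (k + 1) : ℝ)⁻¹ with ht
  have hparent : basicLength c k = n (k + 1) * (t * basicLength c (k + 1)) := by
    rw [ht, basicLength_succ]
    field_simp
  have hroom : etaMin n η (k + 1) ≤ 2 * (t - 1) * basicLength c (k + 1) := by
    have hchildren := S.card_children_mul_le k
    rw [hparent] at hchildren
    linarith [le_of_mul_le_mul_left hchildren (by linarith)]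
  have ht_one : 1 ≤ t := by
    nlinarith [S.etaMin_nonneg (k := k + 1) (by omega)]
  have hbernoulli := one_add_mul_self_le_rpow_one_add (show -1 ≤ t - 1 by linarith)
    (show 1 ≤ 4 * K by linarith)
  rw [add_sub_cancel] at hbernoulli
  rw [b_sub_a hτ, div_le_iff₀ hδ']
  calc S.cellRight τ - S.cellLeft τ
      ≤ basicLength c (k + 1) + 2 * K * etaMin n η (k + 1) := cellRight_sub_cellLeft_le hgaps hτ
    _ ≤ basicLength c (k + 1) + 2 * K * (2 * (t - 1) * basicLength c (k + 1)) := by gcongr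
    _ = (1 + 4 * K * (t - 1)) * basicLength c (k + 1) := by ring
    _ ≤ t ^ (4 * K) * basicLength c (k + 1) := by gcongr

/-! ### The mass distribution -/

/-- The mass of `J_σ`: starting from `1` on `[0, 1]`, the mass of every basic interval is divided
among its children in proportion to the lengths of the images under `g` of their cells. -/
noncomputable def weight (S : HomogeneousPerfectStructure n c η) (g : ℝ → ℝ) (σ : List ℕ) : ℝ :=
  List.reverseRecOn σ 1 fun ρ i w ↦
    w * ((g (S.cellRight (ρ ++ [i])) - g (S.cellLeft (ρ ++ [i]))) / (g (S.b ρ) - g (S.a ρ)))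

/-- The words of the basic intervals of order `k` that meet `[x, y]`. -/
noncomputable def meeting (S : HomogeneousPerfectStructure n c η) (k : ℕ) (x y : ℝ) :
    Finset (List ℕ) :=
  {σ ∈ words n k | S.a σ ≤ y ∧ x ≤ S.b σ}

/-- The total mass of the basic intervals of order `k` that meet `[x, y]`. -/
noncomputable def mass (S : HomogeneousPerfectStructure n c η) (g : ℝ → ℝ) (k : ℕ) (x y : ℝ) : ℝ :=
  ∑ σ ∈ S.meeting k x y, S.weight g σ

section Mass

variable {S : HomogeneousPerfectStructure n c η} {g : ℝ → ℝ} {k : ℕ} {σ : List ℕ} {x y : ℝ}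

lemma mem_meeting : σ ∈ S.meeting k x y ↔ σ ∈ words n k ∧ S.a σ ≤ y ∧ x ≤ S.b σ :=
  Finset.mem_filter

lemma weight_nil : S.weight g [] = 1 := by rw [weight, List.reverseRecOn_nil]

lemma weight_append (σ : List ℕ) (i : ℕ) : S.weight g (σ ++ [i]) = S.weight g σ *
    ((g (S.cellRight (σ ++ [i])) - g (S.cellLeft (σ ++ [i]))) / (g (S.b σ) - g (S.a σ))) := by
  rw [weight, List.reverseRecOn_concat, weight]

lemma weight_nonneg (hg : StrictMono g) (hσ : σ ∈ words n k) : 0 ≤ S.weight g σ := by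
  induction k generalizing σ with
  | zero =>
    obtain rfl := Finset.mem_singleton.1 hσ
    rw [weight_nil]
    exact zero_le_one
  | succ k ih =>
    obtain ⟨ρ, hρ, i, -, rfl⟩ := mem_words_succ.1 hσ
    rw [weight_append]
    exact mul_nonneg (ih hρ) (div_nonneg (sub_nonneg.2 (hg.monotone (cellLeft_lt_cellRight hσ).le))
      (sub_nonneg.2 (hg.monotone (a_lt_b hρ).le)))

lemma sum_weight_children (hg : StrictMono g) (hσ : σ ∈ words n k) :
    ∑ i ∈ Finset.range (n (k + 1)), S.weight g (σ ++ [i + 1]) = S.weight g σ := by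
  have himage : g (S.b σ) - g (S.a σ) ≠ 0 := (sub_pos.2 (hg (a_lt_b hσ))).ne'
  simp only [weight_append]
  rw [← Finset.mul_sum, ← Finset.sum_div, sum_cells_eq g hσ, div_self himage, mul_one]

lemma sum_weight (hg : StrictMono g) (k : ℕ) : ∑ σ ∈ words n k, S.weight g σ = 1 := by
  induction k with
  | zero => rw [words, Finset.sum_singleton, weight_nil]
  | succ k ih =>
    rw [sum_words_succ, ← ih]
    exact Finset.sum_congr rfl fun σ hσ ↦ sum_weight_children hg hσ

lemma weight_le_mul_cell {W : ℝ} (hg : StrictMono g)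
    (hW : ∀ σ ∈ words n k, S.weight g σ ≤ W * (g (S.b σ) - g (S.a σ)))
    {τ : List ℕ} (hτ : τ ∈ words n (k + 1)) :
    S.weight g τ ≤ W * (g (S.cellRight τ) - g (S.cellLeft τ)) := by
  obtain ⟨ρ, hρ, i, -, rfl⟩ := mem_words_succ.1 hτ
  have hparent : 0 < g (S.b ρ) - g (S.a ρ) := sub_pos.2 (hg (a_lt_b hρ))
  have hcell : 0 ≤ g (S.cellRight (ρ ++ [i + 1])) - g (S.cellLeft (ρ ++ [i + 1])) :=
    sub_nonneg.2 (hg.monotone (cellLeft_lt_cellRight hτ).le)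
  rw [weight_append, mul_div_left_comm, mul_comm W]
  exact mul_le_mul_of_nonneg_left ((div_le_iff₀ hparent).2 (hW ρ hρ)) hcell

lemma mass_le_one (hg : StrictMono g) : S.mass g k x y ≤ 1 := by
  rw [← sum_weight (S := S) hg k]
  exact Finset.sum_le_sum_of_subset_of_nonneg (Finset.filter_subset _ _)
    fun σ hσ _ ↦ weight_nonneg hg hσ

lemma antitone_mass (hg : StrictMono g) : Antitone fun k ↦ S.mass g k x y := by
  refine antitone_nat_of_succ_le fun k ↦ ?_
  simp only [mass, meeting, Finset.sum_filter]
  rw [sum_words_succ]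
  refine Finset.sum_le_sum fun σ hσ ↦ ?_
  split_ifs with hmeet
  · rw [← sum_weight_children hg hσ]
    refine Finset.sum_le_sum fun i hi ↦ ?_
    split_ifs
    exacts [le_rfl, weight_nonneg hg (append_mem_words hσ (Finset.mem_range.1 hi))]
  · refine (Finset.sum_eq_zero fun i hi ↦ if_neg fun hchild ↦ hmeet ?_).le
    have hi := Finset.mem_range.1 hi
    exact ⟨(a_le_a_append hσ hi).trans hchild.1, hchild.2.trans (b_append_le_b hσ hi)⟩

lemma one_le_sum_mass (hg : StrictMono g) {F : Finset ℕ} {x y : ℕ → ℝ}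
    (hF : ∀ σ ∈ words n k, ∃ t ∈ F, S.a σ ≤ y t ∧ x t ≤ S.b σ) :
    1 ≤ ∑ t ∈ F, S.mass g k (x t) (y t) := by
  rw [← sum_weight (S := S) hg k]
  simp only [mass, meeting, Finset.sum_filter]
  rw [Finset.sum_comm]
  refine Finset.sum_le_sum fun σ hσ ↦ ?_
  obtain ⟨t, ht, hmeet⟩ := hF σ hσ
  have hle := Finset.single_le_sum
    (f := fun t ↦ if S.a σ ≤ y t ∧ x t ≤ S.b σ then S.weight g σ else 0)
    (fun t _ ↦ ite_nonneg (weight_nonneg hg hσ) le_rfl) ht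
  rwa [if_pos hmeet] at hle

end Mass

/-! ### Growth of the mass when the dimension is one -/

lemma Ek_eq_biUnion_words (S : HomogeneousPerfectStructure n c η) (k : ℕ) :
    S.Ek k = ⋃ σ ∈ words n k, Icc (S.a σ) (S.b σ) := by
  simp only [Ek, mem_ofPred_eq, mem_words]

lemma eventually_one_le_card_mul_rpow (S : HomogeneousPerfectStructure n c η) {s : NNReal}
    (hs : s < dimH S.E) : ∀ᶠ k in atTop, 1 ≤ (words n k).card * basicLength c k ^ (s : ℝ) := by
  have hmeasure := hausdorffMeasure_of_lt_dimH hs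
  have hliminf := Measure.hausdorffMeasure_le_liminf_sum (ι := fun k ↦ words n k) (s : ℝ) S.E
    (l := atTop) (fun k ↦ ENNReal.ofReal (basicLength c k))
    (by simpa using ENNReal.tendsto_ofReal S.tendsto_basicLength)
    (fun k σ ↦ Icc (S.a σ) (S.b σ))
    (.of_forall fun k σ ↦ by rw [Real.ediam_Icc, b_sub_a σ.2])
    (.of_forall fun k ↦ (iInter_subset S.Ek k).trans
      (by simp only [S.Ek_eq_biUnion_words, iUnion_subtype, subset_rfl]))
  rw [hmeasure, top_le_iff] at hliminf
  have hlarge := eventually_lt_of_lt_liminf (hliminf ▸ ENNReal.one_lt_top)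
  filter_upwards [hlarge] with k hk
  have hsum : ∑ σ : words n k, Metric.ediam (Icc (S.a σ) (S.b σ)) ^ (s : ℝ) =
      ENNReal.ofReal ((words n k).card * basicLength c k ^ (s : ℝ)) := by
    rw [Finset.sum_coe_sort (words n k) fun σ ↦ Metric.ediam (Icc (S.a σ) (S.b σ)) ^ (s : ℝ),
      Finset.sum_congr rfl fun σ hσ ↦ by rw [Real.ediam_Icc, b_sub_a hσ],
      Finset.sum_const, nsmul_eq_mul, ENNReal.ofReal_rpow_of_pos (S.basicLength_pos k),
      ENNReal.ofReal_mul (Nat.cast_nonneg _), ENNReal.ofReal_natCast]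
  rw [hsum, ENNReal.one_lt_ofReal] at hk
  exact hk.le

lemma exists_rpow_le_mul_totalLength {S : HomogeneousPerfectStructure n c η}
    (hdim : dimH S.E = 1) {ε : ℝ} (hε : 0 < ε) :
    ∃ C, 0 < C ∧ ∀ k, basicLength c k ^ ε ≤ C * totalLength n c k := by
  have heventually : ∀ᶠ k in atTop, basicLength c k ^ ε / totalLength n c k ≤ 1 := by
    have hs : (Real.toNNReal (1 - ε) : ℝ≥0∞) < dimH S.E := by
      rw [hdim, ENNReal.coe_lt_one_iff, Real.toNNReal_lt_one]
      linarith
    filter_upwards [S.eventually_one_le_card_mul_rpow hs] with k hk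
    have hδ := S.basicLength_pos k
    rw [div_le_one (S.totalLength_pos k)]
    calc basicLength c k ^ ε
        ≤ basicLength c k ^ ε *
            ((words n k).card * basicLength c k ^ (Real.toNNReal (1 - ε) : ℝ)) :=
          le_mul_of_one_le_right (by positivity) hk
      _ = (words n k).card * basicLength c k ^ (ε + (Real.toNNReal (1 - ε) : ℝ)) := by
          rw [Real.rpow_add hδ]
          ring
      _ ≤ (words n k).card * basicLength c k ^ (1 : ℝ) := by
          gcongr ?_ * ?_
          refine Real.rpow_le_rpow_of_exponent_ge hδ (S.basicLength_le_one k) ?_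
          linarith [Real.le_coe_toNNReal (1 - ε)]
      _ = totalLength n c k := by rw [Real.rpow_one, totalLength]
  obtain ⟨C, hC⟩ := (isBoundedUnder_of_eventually_le heventually).bddAbove_range
  refine ⟨max C 1, by positivity, fun k ↦ ?_⟩
  rw [← div_le_iff₀ (S.totalLength_pos k)]
  exact (hC (mem_range_self k)).trans (le_max_left _ _)

lemma exists_weight_le_pow_mul {S : HomogeneousPerfectStructure n c η} {g : ℝ → ℝ} {K M κ : ℝ}
    (hgaps : ComparableGaps n η K) (hg : BeurlingAhlfors g M) (hκ : 1 < κ) :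
    ∃ A : ℝ, 0 < A ∧ ∀ k, ∀ σ ∈ words n k, S.weight g σ ≤
      (g 1 - g 0)⁻¹ * κ ^ k * (totalLength n c k)⁻¹ ^ A * (g (S.b σ) - g (S.a σ)) := by
  obtain ⟨A, hA, hratio⟩ := hg.exists_sub_le_mul_rpow_mul hκ
  have hK := hgaps.one_le
  have hg_unit : 0 < g 1 - g 0 := hg.sub_pos zero_lt_one
  refine ⟨4 * K * A, by positivity, fun k ↦ ?_⟩
  induction k with
  | zero =>
    intro σ hσ
    obtain rfl := Finset.mem_singleton.1 hσ
    rw [weight_nil, S.root_a, S.root_b, totalLength_zero, inv_one, Real.one_rpow, pow_zero,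
      mul_one, mul_one, inv_mul_cancel₀ hg_unit.ne']
  | succ k ih =>
    intro τ hτ
    have hn : (0 : ℝ) < n (k + 1) := by exact_mod_cast two_pos.trans_le (S.hn (k + 1) (by omega))
    have hc := (S.hc (k + 1) (by omega)).1
    have htotal := S.totalLength_pos k
    have hab : S.a τ < S.b τ := a_lt_b hτ
    have hcell : g (S.cellRight τ) - g (S.cellLeft τ) ≤
        κ * ((n (k + 1) * c (k + 1))⁻¹ ^ (4 * K)) ^ A * (g (S.b τ) - g (S.a τ)) := by
      refine (hratio _ _ _ _ (cellLeft_le_a hτ) hab (b_le_cellRight hτ)).trans ?_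
      have himage := (hg.sub_pos hab).le
      have hratio_nonneg := div_nonneg (sub_nonneg.2 (cellLeft_lt_cellRight (S := S) hτ).le)
        (sub_nonneg.2 hab.le)
      gcongr
      exact cell_div_le_rpow hgaps hτ
    calc S.weight g τ
        ≤ (g 1 - g 0)⁻¹ * κ ^ k * (totalLength n c k)⁻¹ ^ (4 * K * A) *
            (g (S.cellRight τ) - g (S.cellLeft τ)) := weight_le_mul_cell hg.strictMono ih hτ
      _ ≤ (g 1 - g 0)⁻¹ * κ ^ k * (totalLength n c k)⁻¹ ^ (4 * K * A) *
            (κ * ((n (k + 1) * c (k + 1))⁻¹ ^ (4 * K)) ^ A * (g (S.b τ) - g (S.a τ))) := by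
          gcongr
      _ = _ := by
          rw [totalLength_succ, mul_inv (n (k + 1) * c (k + 1) : ℝ),
            Real.mul_rpow (by positivity) (by positivity), ← Real.rpow_mul (by positivity)]
          ring

lemma pow_two_rpow_le_basicLength_rpow_neg (S : HomogeneousPerfectStructure n c η) {ε : ℝ}
    (hε : 0 ≤ ε) (k : ℕ) : ((2 : ℝ) ^ ε) ^ k ≤ basicLength c k ^ (-ε) := by
  have hδ := S.basicLength_pos k
  calc ((2 : ℝ) ^ ε) ^ k = ((1 / 2) ^ k : ℝ) ^ (-ε) := by
        rw [Real.rpow_pow_comm zero_le_two, one_div, inv_pow, Real.inv_rpow (by positivity),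
          Real.rpow_neg (by positivity), inv_inv]
    _ ≤ basicLength c k ^ (-ε) :=
        Real.rpow_le_rpow_of_nonpos hδ (S.basicLength_le_half_pow k) (neg_nonpos.2 hε)

lemma exists_weight_le_rpow_neg_mul {S : HomogeneousPerfectStructure n c η} {g : ℝ → ℝ}
    {K M ε : ℝ} (hgaps : ComparableGaps n η K) (hg : BeurlingAhlfors g M) (hdim : dimH S.E = 1)
    (hε : 0 < ε) : ∃ C, 0 < C ∧ ∀ k, ∀ σ ∈ words n k,
      S.weight g σ ≤ C * basicLength c k ^ (-ε) * (g (S.b σ) - g (S.a σ)) := by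
  obtain ⟨A, hA, hweight⟩ := exists_weight_le_pow_mul (S := S) hgaps hg
    (Real.one_lt_rpow one_lt_two (half_pos hε))
  obtain ⟨C, hC, htotal⟩ := exists_rpow_le_mul_totalLength hdim (div_pos (half_pos hε) hA)
  have hg_unit : 0 < g 1 - g 0 := hg.sub_pos zero_lt_one
  refine ⟨(g 1 - g 0)⁻¹ * C ^ A, by positivity, fun k σ hσ ↦ (hweight k σ hσ).trans ?_⟩
  have hδ := S.basicLength_pos k
  have htotal_pos := S.totalLength_pos k
  have himage : 0 ≤ g (S.b σ) - g (S.a σ) := (hg.sub_pos (a_lt_b hσ)).le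
  have htotal_rpow : (totalLength n c k)⁻¹ ^ A ≤ C ^ A * basicLength c k ^ (-(ε / 2)) := by
    calc (totalLength n c k)⁻¹ ^ A ≤ (C * basicLength c k ^ (-(ε / 2 / A))) ^ A := by
          gcongr
          rw [Real.rpow_neg hδ.le, ← div_eq_mul_inv, inv_le_comm₀ htotal_pos (by positivity),
            inv_div, div_le_iff₀' hC]
          exact htotal k
      _ = C ^ A * basicLength c k ^ (-(ε / 2)) := by
          rw [Real.mul_rpow hC.le (by positivity), ← Real.rpow_mul hδ.le, neg_mul,
            div_mul_cancel₀ _ hA.ne']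
  have hpow := S.pow_two_rpow_le_basicLength_rpow_neg (half_pos hε).le k
  calc (g 1 - g 0)⁻¹ * ((2 : ℝ) ^ (ε / 2)) ^ k * (totalLength n c k)⁻¹ ^ A *
        (g (S.b σ) - g (S.a σ))
      ≤ (g 1 - g 0)⁻¹ * basicLength c k ^ (-(ε / 2)) *
          (C ^ A * basicLength c k ^ (-(ε / 2))) * (g (S.b σ) - g (S.a σ)) := by gcongr
    _ = (g 1 - g 0)⁻¹ * C ^ A * basicLength c k ^ (-ε) * (g (S.b σ) - g (S.a σ)) := by
        rw [show -ε = -(ε / 2) + -(ε / 2) by ring, Real.rpow_add hδ]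
        ring

/-- `W k` bounds the masses of the basic intervals `J` of order `k` relative to `|g(J)|`, and is
so small that `W k * |g(I)| ≤ C * |g(I)| ^ s` for all intervals `I ⊆ [-1, 2]` which are not longer
than the basic intervals of order `k`. -/
structure WeightMajorant (S : HomogeneousPerfectStructure n c η) (g : ℝ → ℝ) (s C : ℝ)
    (W : ℕ → ℝ) : Prop where
  nonneg : ∀ k, 0 ≤ W k
  weight_le : ∀ k, ∀ σ ∈ words n k, S.weight g σ ≤ W k * (g (S.b σ) - g (S.a σ))
  mul_sub_le : ∀ k u v, -1 ≤ u → u < v → v ≤ 2 → v - u ≤ basicLength c k →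
    W k * (g v - g u) ≤ C * (g v - g u) ^ s

lemma exists_weightMajorant {S : HomogeneousPerfectStructure n c η} {g : ℝ → ℝ} {K M s : ℝ}
    (hgaps : ComparableGaps n η K) (hg : BeurlingAhlfors g M) (hdim : dimH S.E = 1) (hs : s < 1) :
    ∃ C W, 0 < C ∧ WeightMajorant S g s C W := by
  obtain ⟨ε, C, hε, hC, hgauge⟩ :=
    hg.exists_rpow_neg_mul_sub_le_rpow (show (-1 : ℝ) < 2 by norm_num) hs
  obtain ⟨D, hD, hweight⟩ := exists_weight_le_rpow_neg_mul hgaps hg hdim hε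
  refine ⟨D * C, fun k ↦ D * basicLength c k ^ (-ε), by positivity, ?_, hweight, ?_⟩
  · exact fun k ↦ mul_nonneg hD.le (Real.rpow_nonneg (S.basicLength_pos k).le _)
  · intro k u v hu huv hv hle
    have himage : 0 ≤ g v - g u := (hg.sub_pos huv).le
    have hrpow : basicLength c k ^ (-ε) ≤ (v - u) ^ (-ε) :=
      Real.rpow_le_rpow_of_nonpos (sub_pos.2 huv) hle (neg_nonpos.2 hε.le)
    calc D * basicLength c k ^ (-ε) * (g v - g u)
        ≤ D * ((v - u) ^ (-ε) * (g v - g u)) := by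
          rw [mul_assoc]
          gcongr
      _ ≤ D * C * (g v - g u) ^ s := by
          rw [mul_assoc]
          exact mul_le_mul_of_nonneg_left (hgauge u v hu huv hv) hD.le

lemma cell_subset_of_mem_meeting {S : HomogeneousPerfectStructure n c η} {K x y r : ℝ} {k : ℕ}
    (hgaps : ComparableGaps n η K)
    (hr : basicLength c (k + 1) + 2 * K * etaMin n η (k + 1) ≤ r) {τ : List ℕ}
    (hτ : τ ∈ S.meeting (k + 1) x y) : x - r ≤ S.cellLeft τ ∧ S.cellRight τ ≤ y + r := by
  obtain ⟨hword, hleft, hright⟩ := mem_meeting.1 hτ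
  have hcell := (cellRight_sub_cellLeft_le (S := S) hgaps hword).trans hr
  have ha := cellLeft_le_a (S := S) hword
  have hb := b_le_cellRight (S := S) hword
  constructor <;> linarith

lemma mass_succ_le_mul {S : HomogeneousPerfectStructure n c η} {g : ℝ → ℝ} {K W x y r : ℝ} {k : ℕ}
    (hgaps : ComparableGaps n η K) (hg : StrictMono g) (hW : 0 ≤ W)
    (hweight : ∀ σ ∈ words n k, S.weight g σ ≤ W * (g (S.b σ) - g (S.a σ)))
    (hr : basicLength c (k + 1) + 2 * K * etaMin n η (k + 1) ≤ r) (hxy : x - r ≤ y + r) :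
    S.mass g (k + 1) x y ≤ W * (g (y + r) - g (x - r)) := by
  calc S.mass g (k + 1) x y
      ≤ ∑ τ ∈ S.meeting (k + 1) x y, W * (g (S.cellRight τ) - g (S.cellLeft τ)) :=
        Finset.sum_le_sum fun τ hτ ↦ weight_le_mul_cell hg hweight (mem_meeting.1 hτ).1
    _ ≤ W * (g (y + r) - g (x - r)) := by
        rw [← Finset.mul_sum]
        exact mul_le_mul_of_nonneg_left (sum_cells_le hg.monotone hxy (Finset.filter_subset _ _)
          fun τ hτ ↦ cell_subset_of_mem_meeting hgaps hr hτ) hW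

lemma card_meeting_succ_mul_le {S : HomogeneousPerfectStructure n c η} {K x y r : ℝ} {k : ℕ}
    (hgaps : ComparableGaps n η K)
    (hr : basicLength c (k + 1) + 2 * K * etaMin n η (k + 1) ≤ r) (hxy : x - r ≤ y + r) :
    (S.meeting (k + 1) x y).card * (basicLength c (k + 1) + etaMin n η (k + 1) / 2) ≤
      y - x + 2 * r := by
  have hcells : ∑ τ ∈ S.meeting (k + 1) x y, (S.cellRight τ - S.cellLeft τ) ≤ y + r - (x - r) :=
    sum_cells_le monotone_id hxy (Finset.filter_subset _ _)
      fun τ hτ ↦ cell_subset_of_mem_meeting hgaps hr hτ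
  have hcard := Finset.card_nsmul_le_sum (S.meeting (k + 1) x y)
    (fun τ ↦ S.cellRight τ - S.cellLeft τ) _
    fun τ hτ ↦ le_cellRight_sub_cellLeft (mem_meeting.1 hτ).1
  rw [nsmul_eq_mul] at hcard
  linarith

/-! ### Frostman's condition at the three possible scales -/

section Frostman

variable {S : HomogeneousPerfectStructure n c η} {g : ℝ → ℝ} {K B C s x y : ℝ} {W : ℕ → ℝ} {k : ℕ}

lemma mass_zero_le_of_one_le (hg : StrictMono g) (hs : 0 ≤ s) (hK : 1 ≤ 2 * K)
    (hB : g (y + 2 * K * (y - x)) - g (x - 2 * K * (y - x)) ≤ B * (g y - g x))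
    (hx : x ≤ 1) (hy : 0 ≤ y) (hxy : 1 ≤ y - x) :
    S.mass g 0 x y ≤ (B / (g 1 - g 0) * (g y - g x)) ^ s := by
  have hg_unit : 0 < g 1 - g 0 := sub_pos.2 (hg zero_lt_one)
  have hle : g 1 - g 0 ≤ B * (g y - g x) :=
    (sub_le_sub (hg.monotone (by nlinarith)) (hg.monotone (by nlinarith))).trans hB
  refine (mass_le_one hg).trans (Real.one_le_rpow ?_ hs)
  rwa [div_mul_eq_mul_div, one_le_div hg_unit]

lemma WeightMajorant.mass_succ_le_of_add_etaMin_le (hW : WeightMajorant S g s C W)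
    (hgaps : ComparableGaps n η K) (hg : StrictMono g) (hB_nonneg : 0 ≤ B)
    (hB : g (y + 2 * K * (y - x)) - g (x - 2 * K * (y - x)) ≤ B * (g y - g x))
    (hx : -1 ≤ x) (hxy : x < y) (hy : y ≤ 2)
    (hle : basicLength c (k + 1) + etaMin n η (k + 1) ≤ y - x)
    (hlt : y - x ≤ basicLength c k) :
    S.mass g (k + 1) x y ≤ B * C * (g y - g x) ^ s := by
  have hK := hgaps.one_le
  have hδ := S.basicLength_pos (k + 1)
  calc S.mass g (k + 1) x y
      ≤ W k * (g (y + 2 * K * (y - x)) - g (x - 2 * K * (y - x))) :=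
        mass_succ_le_mul hgaps hg (hW.nonneg k) (hW.weight_le k) (by nlinarith) (by nlinarith)
    _ ≤ W k * (B * (g y - g x)) := mul_le_mul_of_nonneg_left hB (hW.nonneg k)
    _ = B * (W k * (g y - g x)) := by ring
    _ ≤ B * C * (g y - g x) ^ s := by
        rw [mul_assoc]
        exact mul_le_mul_of_nonneg_left (hW.mul_sub_le k x y hx hxy hy hlt) hB_nonneg

lemma card_meeting_succ_le (hgaps : ComparableGaps n η K) (hxy : x < y)
    (hle : y - x ≤ basicLength c (k + 1) + etaMin n η (k + 1)) :
    ((S.meeting (k + 1) x y).card : ℝ) ≤ 2 * (1 + 4 * K) := by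
  have hK := hgaps.one_le
  have hm := S.etaMin_nonneg (k := k + 1) (by omega)
  have hδ := S.basicLength_pos (k + 1)
  have hcard := card_meeting_succ_mul_le (S := S) (x := x) (y := y)
    (r := 2 * K * (basicLength c (k + 1) + etaMin n η (k + 1))) hgaps (by nlinarith) (by nlinarith)
  refine le_of_mul_le_mul_right (hcard.trans ?_)
    (show 0 < basicLength c (k + 1) + etaMin n η (k + 1) / 2 by positivity)
  nlinarith

lemma WeightMajorant.mass_succ_le_of_le_add_etaMin (hW : WeightMajorant S g s C W)
    (hgaps : ComparableGaps n η K) (hg : StrictMono g) (hs : 0 ≤ s) (hC : 0 ≤ C)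
    (hB_nonneg : 0 ≤ B)
    (hB : g (y + 2 * K * (y - x)) - g (x - 2 * K * (y - x)) ≤ B * (g y - g x)) (hxy : x < y)
    (hlt : basicLength c (k + 1) ≤ y - x)
    (hle : y - x ≤ basicLength c (k + 1) + etaMin n η (k + 1)) :
    S.mass g (k + 1) x y ≤ 2 * (1 + 4 * K) * (C * (B * (g y - g x)) ^ s) := by
  have hK := hgaps.one_le
  have hweight : ∀ τ ∈ S.meeting (k + 1) x y, S.weight g τ ≤ C * (B * (g y - g x)) ^ s := by
    intro τ hτ
    obtain ⟨hword, hleft, hright⟩ := mem_meeting.1 hτ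
    have hlength := b_sub_a (S := S) hword
    have hab : S.a τ < S.b τ := a_lt_b hword
    obtain ⟨ha, hb⟩ := a_nonneg_and_b_le_one (S := S) hword
    have himage : 0 ≤ g (S.b τ) - g (S.a τ) := sub_nonneg.2 (hg.monotone hab.le)
    calc S.weight g τ ≤ W (k + 1) * (g (S.b τ) - g (S.a τ)) := hW.weight_le _ τ hword
      _ ≤ C * (g (S.b τ) - g (S.a τ)) ^ s :=
          hW.mul_sub_le _ _ _ (by linarith) hab (by linarith) hlength.le
      _ ≤ C * (B * (g y - g x)) ^ s := by
          gcongr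
          exact (sub_le_sub (hg.monotone (by nlinarith)) (hg.monotone (by nlinarith))).trans hB
  have hsum := Finset.sum_le_card_nsmul _ _ _ hweight
  rw [nsmul_eq_mul] at hsum
  have himage : 0 ≤ g y - g x := sub_nonneg.2 (hg.monotone hxy.le)
  exact hsum.trans (mul_le_mul_of_nonneg_right (card_meeting_succ_le hgaps hxy hle)
    (by positivity))

end Frostman

lemma exists_basicLength_le_lt (S : HomogeneousPerfectStructure n c η) {l : ℝ} (hl_pos : 0 < l)
    (hl : l < 1) : ∃ k, basicLength c (k + 1) ≤ l ∧ l < basicLength c k := by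
  have hex : ∃ k, basicLength c k ≤ l :=
    (S.tendsto_basicLength.eventually_le_const hl_pos).exists
  have hzero : ¬basicLength c 0 ≤ l := by simpa [basicLength] using hl
  obtain ⟨k, hk, hlt⟩ := Nat.exists_not_and_succ_of_not_zero_of_exists hzero hex
  exact ⟨k, hlt, not_le.1 hk⟩

lemma exists_mass_le_mul_rpow {S : HomogeneousPerfectStructure n c η} {g : ℝ → ℝ} {K M s : ℝ}
    (hgaps : ComparableGaps n η K) (hg : BeurlingAhlfors g M) (hdim : dimH S.E = 1)
    (hs_pos : 0 < s) (hs : s < 1) :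
    ∃ C, 0 < C ∧ ∀ x y, x < y → ∃ k, S.mass g k x y ≤ C * (g y - g x) ^ s := by
  have hK := hgaps.one_le
  have hg_unit : 0 < g 1 - g 0 := hg.sub_pos zero_lt_one
  obtain ⟨B, hB_pos, hB⟩ := hg.exists_sub_dilation_le (show 0 ≤ 2 * K by linarith)
  obtain ⟨C, W, hC, hW⟩ := exists_weightMajorant hgaps hg hdim hs
  refine ⟨max ((B / (g 1 - g 0)) ^ s) (max (B * C) (2 * (1 + 4 * K) * C * B ^ s)),
    by positivity, fun x y hxy ↦ ?_⟩
  have himage : 0 < g y - g x := hg.sub_pos hxy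
  by_cases hmeet : 0 ≤ y ∧ x ≤ 1
  · obtain ⟨hy, hx⟩ := hmeet
    rcases le_or_gt 1 (y - x) with hlong | hshort
    · refine ⟨0, (mass_zero_le_of_one_le hg.strictMono hs_pos.le (by linarith) (hB x y hxy)
        hx hy hlong).trans ?_⟩
      rw [Real.mul_rpow (by positivity) himage.le]
      gcongr
      exact le_max_left _ _
    · obtain ⟨k, hk_le, hk_lt⟩ := S.exists_basicLength_le_lt (sub_pos.2 hxy) hshort
      refine ⟨k + 1, ?_⟩
      rcases le_total (basicLength c (k + 1) + etaMin n η (k + 1)) (y - x) with hcoarse | hfine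
      · refine (hW.mass_succ_le_of_add_etaMin_le hgaps hg.strictMono hB_pos.le (hB x y hxy)
          (by linarith) hxy (by linarith) hcoarse hk_lt.le).trans ?_
        gcongr
        exact (le_max_left _ _).trans (le_max_right _ _)
      · refine (hW.mass_succ_le_of_le_add_etaMin hgaps hg.strictMono hs_pos.le hC.le hB_pos.le
          (hB x y hxy) hxy hk_le hfine).trans ?_
        rw [Real.mul_rpow hB_pos.le himage.le, ← mul_assoc, ← mul_assoc]
        gcongr
        exact (le_max_right _ _).trans (le_max_right _ _)
  · have hempty : S.meeting 0 x y = ∅ := by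
      simp only [meeting, words, Finset.filter_singleton, S.root_a, S.root_b, if_neg hmeet]
    refine ⟨0, ?_⟩
    rw [mass, hempty, Finset.sum_empty]
    positivity

lemma isCompact_Ek (S : HomogeneousPerfectStructure n c η) (k : ℕ) : IsCompact (S.Ek k) := by
  rw [S.Ek_eq_biUnion_words]
  exact (words n k).isCompact_biUnion fun _ _ ↦ isCompact_Icc

lemma antitone_Ek (S : HomogeneousPerfectStructure n c η) : Antitone S.Ek := by
  refine antitone_nat_of_succ_le fun k ↦ ?_
  rw [S.Ek_eq_biUnion_words, S.Ek_eq_biUnion_words]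
  refine iUnion₂_subset fun τ hτ ↦ ?_
  obtain ⟨σ, hσ, i, hi, rfl⟩ := mem_words_succ.1 hτ
  exact (Icc_subset_Icc (a_le_a_append hσ hi) (b_append_le_b hσ hi)).trans
    (subset_biUnion_of_mem (u := fun σ ↦ Icc (S.a σ) (S.b σ)) hσ)

lemma exists_finset_Ek_subset_biUnion_of_isOpen (S : HomogeneousPerfectStructure n c η)
    {U : ℕ → Set ℝ} (hU : ∀ t, IsOpen (U t)) (hcover : S.E ⊆ ⋃ t, U t) :
    ∃ k, ∃ F : Finset ℕ, S.Ek k ⊆ ⋃ t ∈ F, U t := by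
  obtain ⟨k, hk⟩ := exists_subset_nhds_of_isCompact S.antitone_Ek.directed_ge S.isCompact_Ek
    fun z hz ↦ (isOpen_iUnion hU).mem_nhds (hcover hz)
  obtain ⟨F, hF⟩ := (S.isCompact_Ek k).elim_finite_subcover U hU hk
  exact ⟨k, F, hF⟩

lemma exists_finset_one_le_mul_sum_rpow {S : HomogeneousPerfectStructure n c η} {g : ℝ → ℝ}
    {C s : ℝ} (hg : StrictMono g)
    (hmass : ∀ x y, x < y → ∃ k, S.mass g k x y ≤ C * (g y - g x) ^ s)
    {x y : ℕ → ℝ} (hxy : ∀ t, x t < y t) (hcover : S.E ⊆ ⋃ t, Ioo (x t) (y t)) :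
    ∃ F : Finset ℕ, 1 ≤ C * ∑ t ∈ F, (g (y t) - g (x t)) ^ s := by
  obtain ⟨k₀, F, hF⟩ := S.exists_finset_Ek_subset_biUnion_of_isOpen (fun _ ↦ isOpen_Ioo) hcover
  choose k hk using fun t ↦ hmass (x t) (y t) (hxy t)
  refine ⟨F, ?_⟩
  have hone := one_le_sum_mass (S := S) (k := max k₀ (F.sup k)) hg (F := F) (x := x) (y := y) ?_
  · rw [Finset.mul_sum]
    exact hone.trans (Finset.sum_le_sum fun t ht ↦ (antitone_mass hg
      ((Finset.le_sup ht).trans (le_max_right _ _))).trans (hk t))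
  · intro σ hσ
    have ha : S.a σ ∈ S.Ek k₀ := S.antitone_Ek (le_max_left k₀ (F.sup k)) (by
      rw [S.Ek_eq_biUnion_words]
      exact mem_biUnion hσ (left_mem_Icc.2 (a_lt_b hσ).le))
    obtain ⟨t, ht, hat⟩ := mem_iUnion₂.1 (hF ha)
    exact ⟨t, ht, hat.2.le, hat.1.le.trans (a_lt_b hσ).le⟩

lemma hausdorffMeasure_image_ne_zero {S : HomogeneousPerfectStructure n c η} {f : ℝ ≃ₜ ℝ}
    {K M s : ℝ} (hgaps : ComparableGaps n η K) (hf : BeurlingAhlfors f M) (hdim : dimH S.E = 1)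
    (hs_pos : 0 < s) (hs : s < 1) : μH[s] (f '' S.E) ≠ 0 := by
  intro hzero
  obtain ⟨C, hC, hmass⟩ := exists_mass_le_mul_rpow hgaps hf hdim hs_pos hs
  obtain ⟨u, v, huv, hcover, hsum⟩ := exists_Ioo_cover_of_hausdorffMeasure_eq_zero hs_pos hzero
    (ENNReal.ofReal_pos.2 (inv_pos.2 hC)).ne'
  have hlt_iff (a b : ℝ) : f.symm a < f.symm b ↔ a < b := by
    rw [← hf.strictMono.lt_iff_lt, f.apply_symm_apply, f.apply_symm_apply]
  obtain ⟨F, hF⟩ := exists_finset_one_le_mul_sum_rpow hf.strictMono hmass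
    (x := fun t ↦ f.symm (u t)) (y := fun t ↦ f.symm (v t)) (fun t ↦ (hlt_iff _ _).2 (huv t))
    fun z hz ↦ by
      obtain ⟨t, hut, hvt⟩ := mem_iUnion.1 (hcover (mem_image_of_mem f hz))
      rw [← hlt_iff, f.symm_apply_apply] at hut hvt
      exact mem_iUnion.2 ⟨t, hut, hvt⟩
  simp only [f.apply_symm_apply] at hF
  have hF_lt : ENNReal.ofReal (∑ t ∈ F, (v t - u t) ^ s) < ENNReal.ofReal C⁻¹ := by
    rw [ENNReal.ofReal_sum_of_nonneg fun t _ ↦ Real.rpow_nonneg (sub_nonneg.2 (huv t).le) s]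
    exact (ENNReal.sum_le_tsum F).trans_lt hsum
  rw [ENNReal.ofReal_lt_ofReal_iff (inv_pos.2 hC), ← one_div, lt_div_iff₀' hC] at hF_lt
  exact hF_lt.not_ge hF

lemma dimH_image_eq_one {S : HomogeneousPerfectStructure n c η} {f : ℝ ≃ₜ ℝ} {K M : ℝ}
    (hgaps : ComparableGaps n η K) (hf : BeurlingAhlfors f M) (hdim : dimH S.E = 1) :
    dimH (f '' S.E) = 1 := by
  refine le_antisymm ((dimH_mono (subset_univ _)).trans Real.dimH_univ.le) ?_
  refine ENNReal.le_of_forall_nnreal_lt fun s hs ↦ ?_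
  rcases eq_zero_or_pos s with rfl | hs_pos
  · exact zero_le
  · exact le_dimH_of_hausdorffMeasure_ne_zero (hausdorffMeasure_image_ne_zero hgaps hf hdim
      hs_pos (by exact_mod_cast hs))

end HomogeneousPerfectStructure

/-! ### Quasisymmetric maps of the line -/

lemma IsQuasisymmetric.exists_abs_sub_le {f : ℝ ≃ₜ ℝ} (hf : IsQuasisymmetric f) :
    ∃ M : ℝ, ∀ x t, t ≠ 0 → |f x - f (x + t)| ≤ M * |f x - f (x - t)| := by
  obtain ⟨h, hh⟩ := hf
  refine ⟨h ⟨1, mem_Ici.2 zero_le_one⟩, fun x t ht ↦ ?_⟩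
  have hx : f x ≠ f (x - t) := f.injective.ne (by simpa [eq_sub_iff_add_eq] using ht)
  have hratio := hh (x + t) (x - t) x (by simpa using ht)
    (by simpa [eq_sub_iff_add_eq] using ht) fun h ↦ ht (by linarith)
  simpa only [sub_add_cancel_left, sub_sub_cancel, abs_neg, div_self (abs_ne_zero.2 ht),
    div_le_iff₀ (abs_pos.2 (sub_ne_zero.2 hx))] using hratio

lemma IsQuasisymmetric.trans_neg {f : ℝ ≃ₜ ℝ} (hf : IsQuasisymmetric f) :
    IsQuasisymmetric (f.trans (Homeomorph.neg ℝ)) := by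
  obtain ⟨h, hh⟩ := hf
  refine ⟨h, fun a b x hxa hxb hab ↦ ?_⟩
  simpa only [Homeomorph.trans_apply, Homeomorph.coe_neg, neg_sub_neg, abs_sub_comm (f a),
    abs_sub_comm (f b)] using hh a b x hxa hxb hab

lemma IsQuasisymmetric.exists_beurlingAhlfors {f : ℝ ≃ₜ ℝ} (hf : IsQuasisymmetric f)
    (hmono : StrictMono f) : ∃ M, BeurlingAhlfors f M := by
  obtain ⟨M, hM⟩ := hf.exists_abs_sub_le
  have habs_right (x t : ℝ) (ht : 0 < t) : |f x - f (x + t)| = f (x + t) - f x := by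
    rw [abs_sub_comm, abs_of_pos (sub_pos.2 (hmono (by linarith)))]
  have habs_left (x t : ℝ) (ht : 0 < t) : |f x - f (x - t)| = f x - f (x - t) :=
    abs_of_pos (sub_pos.2 (hmono (by linarith)))
  refine ⟨M, hmono, fun x t ht ↦ ?_, fun x t ht ↦ ?_⟩
  · rw [← habs_right x t ht, ← habs_left x t ht]
    exact hM x t ht.ne'
  · rw [← habs_right x t ht, ← habs_left x t ht]
    simpa only [← sub_eq_add_neg, sub_neg_eq_add] using hM x (-t) (neg_ne_zero.2 ht.ne')

lemma IsQuasisymmetric.exists_beurlingAhlfors_dimH_image_eq {f : ℝ ≃ₜ ℝ}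
    (hf : IsQuasisymmetric f) :
    ∃ (g : ℝ ≃ₜ ℝ) (M : ℝ), BeurlingAhlfors g M ∧ ∀ X, dimH (g '' X) = dimH (f '' X) := by
  rcases f.continuous.strictMono_of_inj f.injective with hmono | hanti
  · obtain ⟨M, hM⟩ := hf.exists_beurlingAhlfors hmono
    exact ⟨f, M, hM, fun _ ↦ rfl⟩
  · obtain ⟨M, hM⟩ := hf.trans_neg.exists_beurlingAhlfors hanti.neg
    refine ⟨_, M, hM, fun X ↦ ?_⟩
    rw [← (IsometryEquiv.neg ℝ).isometry.dimH_image (f '' X), image_image]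
    rfl

/-- Yang's theorem. Let `E = E(J_∅,{n_k},{c_k},{η_{k,j}})` be a homogeneous
perfect set such that there are `L ≥ 1` and `c > 0` with `1/L ≤ η_{k,i}/η_{k,j} ≤ L` and
`η_{k,0} + η_{k,n_k} ≤ c·η_{k,i}` for all `k ≥ 1` and all `1 ≤ i, j ≤ n_k − 1`.
If `dim_H E = 1`, then `dim_H f(E) = 1` for every 1-dimensional quasisymmetric mapping `f`. -/
theorem homogeneous_perfect_minimal_yang
    (n : ℕ → ℕ) (c : ℕ → ℝ) (η : ℕ → ℕ → ℝ)
    (S : HomogeneousPerfectStructure n c η)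
    (L : ℝ) (hL : 1 ≤ L) (c' : ℝ) (hc' : 0 < c')
    (hratio : ∀ k, 1 ≤ k → ∀ i j, 1 ≤ i → i ≤ n k - 1 → 1 ≤ j → j ≤ n k - 1 →
      1 / L ≤ η k i / η k j ∧ η k i / η k j ≤ L)
    (hedge : ∀ k, 1 ≤ k → ∀ i, 1 ≤ i → i ≤ n k - 1 →
      η k 0 + η k (n k) ≤ c' * η k i)
    (hdim : dimH S.E = 1) :
    ∀ f : ℝ ≃ₜ ℝ, IsQuasisymmetric f → dimH (f '' S.E) = 1 := by
  intro f hf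
  have hgaps := comparableGaps_of_div_le hL S.hn S.hη hratio hedge
  obtain ⟨g, M, hg, hdim_image⟩ := hf.exists_beurlingAhlfors_dimH_image_eq
  rw [← hdim_image]
  exact S.dimH_image_eq_one hgaps hg hdim
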